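/- arXiv:1702.03981 — 2 statements merged into one kernel-verified Lean document; each statement's English description precedes it below -/
import Mathlib

section
/- Restricted Automata Equivalence: Let P be a cyclic proof satisfying the three conditions (finitely progressing, dynamic, balanced) with respect to a node ν and trace values τ ∈ TraceVals_𝒜(ν), τ' ∈ TraceVals_𝒞(ν), and let N = 2 + C(P)·maxStep(P)·W(P) + W(P). Then for ∼ ∈ {<, ≤}: L_{ℬ^{(P,ν)}_{(τ,τ')}} ∼ L_{𝒜(N)^{(P,ν)}_{(τ,τ')}} and ℬ^{(P,ν)}_{(τ,τ')} is grounded, if and only if τ' ∼^ν_P τ. -/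
noncomputable section

/-- We work with ordinals in universe 0. -/
abbrev Ordl : Type 1 := Ordinal.{0}

/-- Reverse ordinal sum: `revSum d k = d (k-1) + ⋯ + d 0` (and `0` for `k = 0`). -/
def revSum (d : ℕ → Ordl) : ℕ → Ordl
  | 0 => 0
  | k + 1 => d k + revSum d k

/-- An abstract entailment system: antecedents, consequents, models, the two
satisfaction relations, and finite sets of trace values for antecedents and
consequents (drawn from the disjoint types `TA` and `TC`). -/
structure CES where
  A : Type
  C : Type
  M : Type
  TA : Type
  TC : Type
  satA : M → A → Prop
  satC : M → C → Prop
  tvA : A → Finset TA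
  tvC : C → Finset TC

/-- Validity of a sequent `A ⊢ C`: every model of the antecedent satisfies the consequent. -/
def CES.Valid (S : CES) (s : S.A × S.C) : Prop :=
  ∀ m : S.M, S.satA m s.1 → S.satC m s.2

/-- A cyclic pre-proof: a finite directed graph whose nodes carry sequents and
(ordered) lists of children, together with the trace pair functions `δ1` (on
antecedent trace values) and `δ2` (on consequent trace values) attached to the
rule instance at each node/premise.  `δ1`/`δ2` are partial (Option-valued) and
only defined along edges, on trace values of the respective sequents. -/
structure PreProof (S : CES) where
  Node : Type
  [fintypeNode : Fintype Node]
  [decEqNode : DecidableEq Node]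
  seqOf : Node → S.A × S.C
  children : Node → List Node
  δ1 : Node → Node → S.TA → S.TA → Option Ordl
  δ2 : Node → Node → S.TC → S.TC → Option Ordl
  δ1_dom : ∀ ν ν' τ τ', (δ1 ν ν' τ τ').isSome →
    ν' ∈ children ν ∧ τ ∈ S.tvA (seqOf ν).1 ∧ τ' ∈ S.tvA (seqOf ν').1
  δ2_dom : ∀ ν ν' τ τ', (δ2 ν ν' τ τ').isSome →
    ν' ∈ children ν ∧ τ ∈ S.tvC (seqOf ν).2 ∧ τ' ∈ S.tvC (seqOf ν').2

attribute [instance] PreProof.fintypeNode PreProof.decEqNode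

/-- An ordinal trace function: partial ordinal-valued functions on
(antecedent resp. consequent) trace value/model pairs, defined at least on all
`(τ, m)` with `τ ∈ tvA A` and `m ⊨ A`. -/
structure OTF (S : CES) where
  OA : S.TA → S.M → Option Ordl
  OC : S.TC → S.M → Option Ordl
  definedA : ∀ (a : S.A) (τ : S.TA) (m : S.M),
    τ ∈ S.tvA a → S.satA m a → (OA τ m).isSome

/-- `1̲`: the least value taken by the ordinal trace function. -/
def OTF.leastVal {S : CES} (O : OTF S) : Ordl :=
  sInf {o : Ordl | (∃ τ m, O.OA τ m = some o) ∨ (∃ τ m, O.OC τ m = some o)}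

/-- A sequent `s` equates trace values `τa` and `τc`: whenever `s` is valid,
every model of the antecedent realizing `τc` realizes `τa` with the same size. -/
def OTF.Equates {S : CES} (O : OTF S) (s : S.A × S.C) (τa : S.TA) (τc : S.TC) : Prop :=
  S.Valid s → ∀ m : S.M, S.satA m s.1 →
    ∀ o : Ordl, O.OC τc m = some o → O.OA τa m = some o

namespace PreProof

variable {S : CES}

/-- A node is axiomatic when its rule instance has no premises. -/
def Axiomatic (P : PreProof S) (ν : P.Node) : Prop := P.children ν = []

/-- `νs 0, …, νs (n-1)` is a (finite) path in the pre-proof. -/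
def IsPath (P : PreProof S) (n : ℕ) (νs : ℕ → P.Node) : Prop :=
  ∀ i, i + 1 < n → νs (i + 1) ∈ P.children (νs i)

/-- An infinite path in the pre-proof. -/
def InfPath (P : PreProof S) (νs : ℕ → P.Node) : Prop :=
  ∀ i, νs (i + 1) ∈ P.children (νs i)

/-- A left-hand trace `τs 0, …, τs (k-1)` follows (an initial segment of) the
path `νs 0, …, νs (n-1)`. -/
def FollowsL (P : PreProof S) (n : ℕ) (νs : ℕ → P.Node) (k : ℕ) (τs : ℕ → S.TA) : Prop :=
  k ≤ n ∧ (∀ i < k, τs i ∈ S.tvA (P.seqOf (νs i)).1) ∧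
    ∀ i, i + 1 < k → (P.δ1 (νs i) (νs (i + 1)) (τs i) (τs (i + 1))).isSome

/-- A right-hand trace `τs 0, …, τs (k-1)` follows (an initial segment of) the
path `νs 0, …, νs (n-1)`. -/
def FollowsR (P : PreProof S) (n : ℕ) (νs : ℕ → P.Node) (k : ℕ) (τs : ℕ → S.TC) : Prop :=
  k ≤ n ∧ (∀ i < k, τs i ∈ S.tvC (P.seqOf (νs i)).2) ∧
    ∀ i, i + 1 < k → (P.δ2 (νs i) (νs (i + 1)) (τs i) (τs (i + 1))).isSome

/-- The `δ1`-value of the `i`-th step of a left-hand trace along a path. -/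
def stepL (P : PreProof S) (νs : ℕ → P.Node) (τs : ℕ → S.TA) (i : ℕ) : Ordl :=
  (P.δ1 (νs i) (νs (i + 1)) (τs i) (τs (i + 1))).getD 0

/-- The `δ2`-value of the `i`-th step of a right-hand trace along a path. -/
def stepR (P : PreProof S) (νs : ℕ → P.Node) (τs : ℕ → S.TC) (i : ℕ) : Ordl :=
  (P.δ2 (νs i) (νs (i + 1)) (τs i) (τs (i + 1))).getD 0

/-- Size `Θ` of a left-hand trace of length `k` along a path: the *reverse*
ordinal sum `δ1(τ_{k-2},τ_{k-1}) + ⋯ + δ1(τ_0,τ_1)`. -/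
def thetaL (P : PreProof S) (νs : ℕ → P.Node) (τs : ℕ → S.TA) (k : ℕ) : Ordl :=
  revSum (P.stepL νs τs) (k - 1)

/-- Size `Θ` of a right-hand trace of length `k` along a path (reverse sum). -/
def thetaR (P : PreProof S) (νs : ℕ → P.Node) (τs : ℕ → S.TC) (k : ℕ) : Ordl :=
  revSum (P.stepR νs τs) (k - 1)

/-- The global soundness condition: every infinite path has a tail followed by
an infinitely progressing left-hand trace. -/
def GlobalSound (P : PreProof S) : Prop :=
  ∀ νs : ℕ → P.Node, P.InfPath νs →
    ∃ (k : ℕ) (τs : ℕ → S.TA),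
      (∀ i, (P.δ1 (νs (k + i)) (νs (k + i + 1)) (τs i) (τs (i + 1))).isSome) ∧
      ∀ N, ∃ i, N ≤ i ∧
        ∃ α : Ordl, P.δ1 (νs (k + i)) (νs (k + i + 1)) (τs i) (τs (i + 1)) = some α ∧ 0 < α

/-- A (valid) cyclic proof: a pre-proof satisfying the global soundness
condition; consequently (and we record it as part of the notion) all sequents
occurring in it are valid. -/
def IsCyclicProof (P : PreProof S) : Prop :=
  P.GlobalSound ∧ ∀ ν : P.Node, S.Valid (P.seqOf ν)

/-- The descending counter-model property of an ordinal trace function. -/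
def DCM (P : PreProof S) (O : OTF S) : Prop :=
  ∀ (ν : P.Node) (m : S.M),
    S.satA m (P.seqOf ν).1 → ¬ S.satC m (P.seqOf ν).2 →
    ∃ ν' ∈ P.children ν, ∃ m' : S.M,
      S.satA m' (P.seqOf ν').1 ∧ ¬ S.satC m' (P.seqOf ν').2 ∧
      ∀ (τ τ' : S.TA) (α : Ordl), P.δ1 ν ν' τ τ' = some α →
        ∀ o : Ordl, O.OA τ m = some o →
          ∃ o' : Ordl, O.OA τ' m' = some o' ∧ o' + α ≤ o

/-- A right-hand trace value is terminal for a node when it has no successor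
trace value towards any premise. -/
def TerminalR (P : PreProof S) (ν : P.Node) (σ : S.TC) : Prop :=
  ∀ ν' ∈ P.children ν, ∀ σ', P.δ2 ν ν' σ σ' = none

/-- Defining property of the exclusion predicate: a rule instance (node)
excludes a consequent trace value only if no model of the antecedent realizes
it. -/
def ExclOK (P : PreProof S) (O : OTF S) (Excl : P.Node → S.TC → Prop) : Prop :=
  ∀ (ν : P.Node) (σ : S.TC), Excl ν σ →
    ∀ m : S.M, S.satA m (P.seqOf ν).1 → O.OC σ m = none

/-- A consequent trace value is ground w.r.t. a node: if the node's sequent is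
valid then the value is realized only with the least possible size. -/
def Ground (P : PreProof S) (O : OTF S) (ν : P.Node) (σ : S.TC) : Prop :=
  S.Valid (P.seqOf ν) → ∀ m : S.M, S.satA m (P.seqOf ν).1 →
    ∀ o : Ordl, O.OC σ m = some o → o = O.leastVal

/-- The trace value ordering relation `τ2 ∼^ν_P τ1` (`∼` is `<` when
`strict = true` and `≤` otherwise). -/
def TVO (P : PreProof S) (O : OTF S) (Excl : P.Node → S.TC → Prop) (strict : Bool)
    (ν0 : P.Node) (τ1 : S.TA) (τ2 : S.TC) : Prop :=
  ∀ (n : ℕ) (νs : ℕ → P.Node) (τs : ℕ → S.TC),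
    1 ≤ n → P.IsPath n νs → νs 0 = ν0 → τs 0 = τ2 →
    P.FollowsR n νs n τs →
    P.TerminalR (νs (n - 1)) (τs (n - 1)) →
    ¬ Excl (νs (n - 1)) (τs (n - 1)) →
    ∃ (k : ℕ) (τs' : ℕ → S.TA),
      1 ≤ k ∧ k ≤ n ∧ τs' 0 = τ1 ∧ P.FollowsL n νs k τs' ∧
      (if strict then P.thetaR νs τs n < P.thetaL νs τs' k
        else P.thetaR νs τs n ≤ P.thetaL νs τs' k) ∧
      (P.Ground O (νs (n - 1)) (τs (n - 1)) ∨
        (P.Axiomatic (νs (n - 1)) ∧ k = n ∧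
          O.Equates (P.seqOf (νs (n - 1))) (τs' (n - 1)) (τs (n - 1))))

/-- The descending model property of an ordinal trace function. -/
def DMP (P : PreProof S) (O : OTF S) : Prop :=
  ∀ ν : P.Node, P.children ν ≠ [] →
    S.Valid (P.seqOf ν) → (∀ ν' ∈ P.children ν, S.Valid (P.seqOf ν')) →
    ∀ τ1 ∈ S.tvA (P.seqOf ν).1, ∀ τ2 ∈ S.tvC (P.seqOf ν).2,
    ∀ m : S.M, S.satA m (P.seqOf ν).1 →
    ∃ ν' ∈ P.children ν, ∃ m' : S.M,
      S.satA m' (P.seqOf ν').1 ∧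
      (P.TerminalR ν τ2 ∨ ∃ σ', (P.δ2 ν ν' τ2 σ').isSome) ∧
      (∀ (σ' : S.TA) (α : Ordl), P.δ1 ν ν' τ1 σ' = some α →
        ∀ o : Ordl, O.OA τ1 m = some o →
          ∃ o' : Ordl, O.OA σ' m' = some o' ∧ o' + α ≤ o) ∧
      (∀ (σ' : S.TC) (α : Ordl), P.δ2 ν ν' τ2 σ' = some α →
        ∀ o : Ordl, O.OC τ2 m = some o →
          ∃ o' : Ordl, O.OC σ' m' = some o' ∧ o ≤ o' + α)

/-- A sequence of models supports a left-hand trace along a path. -/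
def SupportsL (P : PreProof S) (O : OTF S) (n : ℕ) (νs : ℕ → P.Node) (k : ℕ)
    (τs : ℕ → S.TA) (ms : ℕ → S.M) : Prop :=
  P.FollowsL n νs k τs ∧
    (∀ i < k, S.satA (ms i) (P.seqOf (νs i)).1 ∧ (O.OA (τs i) (ms i)).isSome) ∧
    ∀ j, j + 1 < k → ∀ o o' : Ordl, O.OA (τs j) (ms j) = some o →
      O.OA (τs (j + 1)) (ms (j + 1)) = some o' →
      o' + P.stepL νs τs j ≤ o

/-- A sequence of models supports a right-hand trace along a path. -/
def SupportsR (P : PreProof S) (O : OTF S) (n : ℕ) (νs : ℕ → P.Node) (k : ℕ)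
    (τs : ℕ → S.TC) (ms : ℕ → S.M) : Prop :=
  P.FollowsR n νs k τs ∧
    (∀ i < k, S.satC (ms i) (P.seqOf (νs i)).2 ∧ (O.OC (τs i) (ms i)).isSome) ∧
    ∀ j, j + 1 < k → ∀ o o' : Ordl, O.OC (τs j) (ms j) = some o →
      O.OC (τs (j + 1)) (ms (j + 1)) = some o' →
      o ≤ o' + P.stepR νs τs j

/-- `(ν', τ')` is reachable from `(ν, τ)` on the left. -/
def ReachL (P : PreProof S) (ν : P.Node) (τ : S.TA) (ν' : P.Node) (τ' : S.TA) : Prop :=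
  ∃ (n : ℕ) (νs : ℕ → P.Node) (τs : ℕ → S.TA),
    1 ≤ n ∧ P.IsPath n νs ∧ P.FollowsL n νs n τs ∧
    νs 0 = ν ∧ τs 0 = τ ∧ νs (n - 1) = ν' ∧ τs (n - 1) = τ'

/-- `(ν', τ')` is reachable from `(ν, τ)` on the right. -/
def ReachR (P : PreProof S) (ν : P.Node) (τ : S.TC) (ν' : P.Node) (τ' : S.TC) : Prop :=
  ∃ (n : ℕ) (νs : ℕ → P.Node) (τs : ℕ → S.TC),
    1 ≤ n ∧ P.IsPath n νs ∧ P.FollowsR n νs n τs ∧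
    νs 0 = ν ∧ τs 0 = τ ∧ νs (n - 1) = ν' ∧ τs (n - 1) = τ'

/-- A left cycle along a path. -/
def IsCycleL (P : PreProof S) (n : ℕ) (νs : ℕ → P.Node) (τs : ℕ → S.TA) : Prop :=
  2 ≤ n ∧ P.IsPath n νs ∧ P.FollowsL n νs n τs ∧ νs (n - 1) = νs 0 ∧ τs (n - 1) = τs 0

/-- A right cycle along a path. -/
def IsCycleR (P : PreProof S) (n : ℕ) (νs : ℕ → P.Node) (τs : ℕ → S.TC) : Prop :=
  2 ≤ n ∧ P.IsPath n νs ∧ P.FollowsR n νs n τs ∧ νs (n - 1) = νs 0 ∧ τs (n - 1) = τs 0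

/-- A simple left cycle. -/
def IsSimpleCycleL (P : PreProof S) (n : ℕ) (νs : ℕ → P.Node) (τs : ℕ → S.TA) : Prop :=
  P.IsCycleL n νs τs ∧
    ∀ i j, 1 ≤ i → i < j → j ≤ n - 1 → ¬ (νs i = νs j ∧ τs i = τs j)

/-- A simple right cycle. -/
def IsSimpleCycleR (P : PreProof S) (n : ℕ) (νs : ℕ → P.Node) (τs : ℕ → S.TC) : Prop :=
  P.IsCycleR n νs τs ∧
    ∀ i j, 1 ≤ i → i < j → j ≤ n - 1 → ¬ (νs i = νs j ∧ τs i = τs j)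

/-- A simple left binary cycle. -/
def IsSimpleBinCycleL (P : PreProof S) (n : ℕ) (νs : ℕ → P.Node)
    (τs τs' : ℕ → S.TA) : Prop :=
  P.IsCycleL n νs τs ∧ P.IsCycleL n νs τs' ∧
    ∀ i j, 1 ≤ i → i < j → j ≤ n - 1 →
      ¬ (νs i = νs j ∧ τs i = τs j ∧ τs' i = τs' j)

/-- `P` is left finitely progressing w.r.t. `(ν0, τ0)`. -/
def FinProgL (P : PreProof S) (ν0 : P.Node) (τ0 : S.TA) : Prop :=
  ∀ (ν1 ν2 : P.Node) (τ1 τ2 : S.TA) (α : Ordl),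
    P.ReachL ν0 τ0 ν1 τ1 → P.δ1 ν1 ν2 τ1 τ2 = some α → α < Ordinal.omega0

/-- `P` is right finitely progressing w.r.t. `(ν0, τ0)`. -/
def FinProgR (P : PreProof S) (ν0 : P.Node) (τ0 : S.TC) : Prop :=
  ∀ (ν1 ν2 : P.Node) (τ1 τ2 : S.TC) (α : Ordl),
    P.ReachR ν0 τ0 ν1 τ1 → P.δ2 ν1 ν2 τ1 τ2 = some α → α < Ordinal.omega0

/-- `P` is dynamic w.r.t. `ν0`, `τA`, `τC`: every reachable left or right
simple cycle has strictly positive size. -/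
def Dynamic (P : PreProof S) (ν0 : P.Node) (τA : S.TA) (τC : S.TC) : Prop :=
  (∀ (n : ℕ) (νs : ℕ → P.Node) (τs : ℕ → S.TA), P.IsSimpleCycleL n νs τs →
    P.ReachL ν0 τA (νs 0) (τs 0) → 0 < P.thetaL νs τs n) ∧
  (∀ (n : ℕ) (νs : ℕ → P.Node) (τs : ℕ → S.TC), P.IsSimpleCycleR n νs τs →
    P.ReachR ν0 τC (νs 0) (τs 0) → 0 < P.thetaR νs τs n)

/-- `P` is balanced w.r.t. `(ν0, τA)`: the two components of every reachable
simple left binary cycle have equal size. -/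
def Balanced (P : PreProof S) (ν0 : P.Node) (τA : S.TA) : Prop :=
  ∀ (n : ℕ) (νs : ℕ → P.Node) (τs τs' : ℕ → S.TA), P.IsSimpleBinCycleL n νs τs τs' →
    P.ReachL ν0 τA (νs 0) (τs 0) → P.ReachL ν0 τA (νs 0) (τs' 0) →
    P.thetaL νs τs n = P.thetaL νs τs' n

/-- The trace width `W(P)`. -/
def traceWidth (P : PreProof S) : ℕ :=
  Finset.univ.sup fun ν : P.Node =>
    max (S.tvA (P.seqOf ν).1).card (S.tvC (P.seqOf ν).2).card

/-- The (binary left-hand) cycle threshold `C(P)`: the number of triples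
`(σ, σ', μ)` with `σ, σ' ∈ TraceVals_A(μ)`. -/
def cycThreshold (P : PreProof S) : ℕ :=
  ∑ ν : P.Node, (S.tvA (P.seqOf ν).1).card * (S.tvA (P.seqOf ν).1).card

/-- `maxStep(P)`: the maximum (finite) `δ1`-value over the edges of `P`. -/
def maxStepN (P : PreProof S) : ℕ :=
  sSup {k : ℕ | ∃ ν ν' τ τ', P.δ1 ν ν' τ τ' = some (k : Ordl)}

/-- The in-degree of the proof graph. -/
def inDeg (P : PreProof S) : ℕ :=
  Finset.univ.sup fun ν' : P.Node =>
    (Finset.univ.filter fun ν : P.Node => ν' ∈ P.children ν).card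

/-- The trace pair function of `P` is trace injective. -/
def TraceInjective (P : PreProof S) : Prop :=
  (∀ (ν ν' : P.Node) (τ τ' τ'' : S.TA),
    (P.δ1 ν ν' τ τ'').isSome → (P.δ1 ν ν' τ' τ'').isSome → τ = τ') ∧
  (∀ (ν ν' : P.Node) (σ σ' σ'' : S.TC),
    (P.δ2 ν ν' σ σ'').isSome → (P.δ2 ν ν' σ' σ'').isSome → σ = σ')

/-- `T_ν(σ)`: the set of antecedent trace values of `ν` equated to `σ`
by the sequent of `ν`. -/
def Tset (P : PreProof S) (O : OTF S) (ν : P.Node) (σ : S.TC) : Set S.TA :=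
  {τ : S.TA | τ ∈ S.tvA (P.seqOf ν).1 ∧ O.Equates (P.seqOf ν) τ σ}

end PreProof

/-! ### Weighted automata over the ordinal max-plus semiring -/

/-- The alphabet `Σ_P`. -/
abbrev Sig {S : CES} (P : PreProof S) : Type := P.Node ⊕ (Set S.TA × S.TC)

/-- States of the antecedent automata (`⊤ⁱ_μ` states are used only by the
approximate automata). -/
inductive AState (Node TA : Type) : Type
  | init : AState Node TA
  | pair : Node → TA → AState Node TA
  | bot : AState Node TA
  | top : AState Node TA
  | topn : Node → ℕ → AState Node TA

instance {Node TA : Type} : Inhabited (AState Node TA) := ⟨AState.init⟩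

/-- States of the consequent automaton. -/
inductive BState (Node TC : Type) : Type
  | init : BState Node TC
  | pair : Node → TC → BState Node TC
  | bot : BState Node TC

instance {Node TC : Type} : Inhabited (BState Node TC) := ⟨BState.init⟩

/-- Transition relation of the (full) antecedent automaton `𝒜^{(P,ν0)}_{(τ1,·)}`. -/
inductive ATrans {S : CES} (P : PreProof S) (O : OTF S) (ν0 : P.Node) (τ1 : S.TA) :
    AState P.Node S.TA → Sig P → AState P.Node S.TA → Prop
  | start : ATrans P O ν0 τ1 .init (Sum.inl ν0) (.pair ν0 τ1)
  | step {μ μ' : P.Node} {σ σ' : S.TA} (h1 : μ' ∈ P.children μ)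
      (h2 : (P.δ1 μ μ' σ σ').isSome) :
      ATrans P O ν0 τ1 (.pair μ σ) (Sum.inl μ') (.pair μ' σ')
  | toBot {μ : P.Node} {σ : S.TA} {σ' : S.TC} (h1 : P.Axiomatic μ)
      (h2 : σ' ∈ S.tvC (P.seqOf μ).2) (h3 : σ ∈ P.Tset O μ σ') :
      ATrans P O ν0 τ1 (.pair μ σ) (Sum.inr (P.Tset O μ σ', σ')) .bot
  | toTop {μ μ' : P.Node} {σ : S.TA} (h : μ' ∈ P.children μ) :
      ATrans P O ν0 τ1 (.pair μ σ) (Sum.inl μ') .top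
  | topLoop (μ : P.Node) : ATrans P O ν0 τ1 .top (Sum.inl μ) .top

/-- Transition relation of the approximate antecedent automaton `𝒜(n)^{(P,ν0)}_{(τ1,·)}`. -/
inductive ATransN {S : CES} (P : PreProof S) (O : OTF S) (n : ℕ) (ν0 : P.Node) (τ1 : S.TA) :
    AState P.Node S.TA → Sig P → AState P.Node S.TA → Prop
  | start : ATransN P O n ν0 τ1 .init (Sum.inl ν0) (.pair ν0 τ1)
  | step {μ μ' : P.Node} {σ σ' : S.TA} (h1 : μ' ∈ P.children μ)
      (h2 : (P.δ1 μ μ' σ σ').isSome) :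
      ATransN P O n ν0 τ1 (.pair μ σ) (Sum.inl μ') (.pair μ' σ')
  | toBot {μ : P.Node} {σ : S.TA} {σ' : S.TC} (h1 : P.Axiomatic μ)
      (h2 : σ' ∈ S.tvC (P.seqOf μ).2) (h3 : σ ∈ P.Tset O μ σ') :
      ATransN P O n ν0 τ1 (.pair μ σ) (Sum.inr (P.Tset O μ σ', σ')) .bot
  | toTopn {μ μ' : P.Node} {σ : S.TA} (h : μ' ∈ P.children μ) :
      ATransN P O n ν0 τ1 (.pair μ σ) (Sum.inl μ') (.topn μ' 1)
  | topnStay {μ μ' : P.Node} {i : ℕ} (h1 : 0 < i) (h2 : i ≤ n) (h3 : μ' ≠ μ) :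
      ATransN P O n ν0 τ1 (.topn μ i) (Sum.inl μ') (.topn μ i)
  | topnStep {μ : P.Node} {i : ℕ} (h1 : 0 < i) (h2 : i < n) :
      ATransN P O n ν0 τ1 (.topn μ i) (Sum.inl μ) (.topn μ (i + 1))

/-- Transition relation of the consequent automaton `ℬ^{(P,ν0)}_{(·,τ2)}`. -/
inductive BTrans {S : CES} (P : PreProof S) (O : OTF S) (Excl : P.Node → S.TC → Prop)
    (ν0 : P.Node) (τ2 : S.TC) :
    BState P.Node S.TC → Sig P → BState P.Node S.TC → Prop
  | start : BTrans P O Excl ν0 τ2 .init (Sum.inl ν0) (.pair ν0 τ2)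
  | step {μ μ' : P.Node} {σ σ' : S.TC} (h1 : μ' ∈ P.children μ)
      (h2 : (P.δ2 μ μ' σ σ').isSome) :
      BTrans P O Excl ν0 τ2 (.pair μ σ) (Sum.inl μ') (.pair μ' σ')
  | toBot {μ : P.Node} {σ : S.TC} (h1 : P.Axiomatic μ) (h2 : σ ∈ S.tvC (P.seqOf μ).2)
      (h3 : ¬ P.Ground O μ σ) (h4 : ¬ Excl μ σ) :
      BTrans P O Excl ν0 τ2 (.pair μ σ) (Sum.inr (P.Tset O μ σ, σ)) .bot

/-- Weight function of the antecedent automata (the only potentially non-zero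
weights sit on pair-to-pair transitions, where they are given by `δ1`). -/
def Awt {S : CES} (P : PreProof S) :
    AState P.Node S.TA → Sig P → AState P.Node S.TA → Ordl
  | .pair μ σ, _, .pair μ' σ' => (P.δ1 μ μ' σ σ').getD 0
  | _, _, _ => 0

/-- Weight function of the consequent automaton. -/
def Bwt {S : CES} (P : PreProof S) :
    BState P.Node S.TC → Sig P → BState P.Node S.TC → Ordl
  | .pair μ σ, _, .pair μ' σ' => (P.δ2 μ μ' σ σ').getD 0
  | _, _, _ => 0

/-- `q` is a run over the word `σ 0, …, σ (m-1)` (from the initial state `q0`). -/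
def IsRun {Q A : Type*} (T : Q → A → Q → Prop) (q0 : Q) (m : ℕ) (σ : ℕ → A)
    (q : ℕ → Q) : Prop :=
  q 0 = q0 ∧ ∀ i < m, T (q i) (σ i) (q (i + 1))

/-- The value of a run: the `⊗`-product (i.e. reverse ordinal sum) of the
weights of its transitions. -/
def runVal {Q A : Type*} (wt : Q → A → Q → Ordl) (m : ℕ) (σ : ℕ → A) (q : ℕ → Q) : Ordl :=
  revSum (fun i => wt (q i) (σ i) (q (i + 1))) m

/-- The quantitative language of a weighted automaton: `⊥` (i.e. `none`) if the
word admits no accepting run, and otherwise the supremum (maximum) of the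
values of its accepting runs. -/
def Lang {Q A : Type*} (T : Q → A → Q → Prop) (q0 : Q) (F : Q → Prop)
    (wt : Q → A → Q → Ordl) (m : ℕ) (σ : ℕ → A) : Option Ordl := by
  classical
  exact if (∃ q : ℕ → Q, IsRun T q0 m σ q ∧ F (q m)) then
    some (sSup {v : Ordl | ∃ q : ℕ → Q, IsRun T q0 m σ q ∧ F (q m) ∧ v = runVal wt m σ q})
  else none

/-- Ordering of quantitative language values, with `⊥ = none` below everything. -/
def OptLE : Option Ordl → Option Ordl → Prop
  | none, _ => True
  | some _, none => False
  | some a, some b => a ≤ b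

/-- Strict ordering of quantitative language values on defined (non-`⊥`) values. -/
def OptLT : Option Ordl → Option Ordl → Prop
  | none, _ => True
  | some _, none => False
  | some a, some b => a < b

/-- `∼` on language values: `<` when `strict`, else `≤`. -/
def OptOrd (strict : Bool) : Option Ordl → Option Ordl → Prop :=
  fun x y => if strict then OptLT x y else OptLE x y

/-- Final states of the antecedent automata: all non-initial states. -/
def AFinal {Node TA : Type} : AState Node TA → Prop := fun q => q ≠ .init

/-- Final states of the consequent automaton. -/
def BFinal {S : CES} (P : PreProof S) (O : OTF S) (Excl : P.Node → S.TC → Prop) :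
    BState P.Node S.TC → Prop
  | .init => False
  | .bot => True
  | .pair μ σ => ¬ Excl μ σ ∧
      ((¬ P.Axiomatic μ ∧ P.TerminalR μ σ) ∨ (P.Axiomatic μ ∧ P.Ground O μ σ))

/-- The quantitative language of `𝒜^{(P,ν0)}_{(τ1,τ2)}` (it does not depend on `τ2`). -/
def LangA {S : CES} (P : PreProof S) (O : OTF S) (ν0 : P.Node) (τ1 : S.TA) :
    ℕ → (ℕ → Sig P) → Option Ordl :=
  Lang (ATrans P O ν0 τ1) .init AFinal (Awt P)

/-- The quantitative language of `𝒜(n)^{(P,ν0)}_{(τ1,τ2)}`. -/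
def LangAN {S : CES} (P : PreProof S) (O : OTF S) (n : ℕ) (ν0 : P.Node) (τ1 : S.TA) :
    ℕ → (ℕ → Sig P) → Option Ordl :=
  Lang (ATransN P O n ν0 τ1) .init AFinal (Awt P)

/-- The quantitative language of `ℬ^{(P,ν0)}_{(τ1,τ2)}` (it does not depend on `τ1`). -/
def LangB {S : CES} (P : PreProof S) (O : OTF S) (Excl : P.Node → S.TC → Prop)
    (ν0 : P.Node) (τ2 : S.TC) : ℕ → (ℕ → Sig P) → Option Ordl :=
  Lang (BTrans P O Excl ν0 τ2) .init (BFinal P O Excl) (Bwt P)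

/-- The automaton `ℬ^{(P,ν0)}_{(·,τ2)}` is grounded: every reachable final pair
state carries a trace value that is ground w.r.t. its node. -/
def BGrounded {S : CES} (P : PreProof S) (O : OTF S) (Excl : P.Node → S.TC → Prop)
    (ν0 : P.Node) (τ2 : S.TC) : Prop :=
  ∀ (μ : P.Node) (σ : S.TC),
    (∃ (m : ℕ) (w : ℕ → Sig P) (q : ℕ → BState P.Node S.TC),
      IsRun (BTrans P O Excl ν0 τ2) .init m w q ∧ q m = .pair μ σ ∧
        BFinal P O Excl (.pair μ σ)) →
    P.Ground O μ σ

/-- Collapse the graded sink states of an approximate automaton onto `⊤`. -/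
def collapseTop {Node TA : Type} : AState Node TA → AState Node TA
  | .topn _ _ => .top
  | q => q

/-- The number of occurrences of the letter `a` among `σ lo, …, σ (hi - 1)`. -/
def cnt {A : Type*} (σ : ℕ → A) (a : A) (lo hi : ℕ) : ℕ := by
  classical
  exact ((Finset.Ico lo hi).filter fun t => σ t = a).card

/-- The set of runs (as lists of states) of an automaton on a word. -/
def RunsOn {Q A : Type*} [Inhabited Q] (T : Q → A → Q → Prop) (q0 : Q)
    (w : List A) : Set (List Q) :=
  {l : List Q | l.length = w.length + 1 ∧ l.getD 0 default = q0 ∧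
    ∀ i, ∀ h : i < w.length, T (l.getD i default) (w.get ⟨i, h⟩) (l.getD (i + 1) default)}

end

/-!
Fix a terminal right-hand trace of length `n` along a path. If it visits some node twice with the
same trace value, the repetition can be pumped; dynamic cycles make the pumped trace arbitrarily
large, so by finite progress the left-hand trace that dominates it must run past the repetition.
Choose a *longest* dominating left-hand trace along the original path, ending at position `k`. If
the node at `k + 1` were visited more than `C(P)·maxStep(P)·W(P) + W(P)` times from there on, the
right-hand trace would repeat late among these visits and produce a left-hand trace `ρ` running
past `C(P)·maxStep(P)·W(P)` of them. Some trace value then recurs along `ρ`, which gains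
`C(P)·maxStep(P)`; by balance two left-hand traces along the same path differ by at most that
much, so `ρ` would be a longer dominating trace. Hence the graded sink of the approximate
automaton has enough levels to read off the dominating trace.
-/

/-! ### Reverse ordinal sums -/

theorem revSum_congr {d e : ℕ → Ordl} {n : ℕ} (h : ∀ i < n, d i = e i) :
    revSum d n = revSum e n := by
  induction n with
  | zero => rfl
  | succ n ih => rw [revSum, revSum, ih fun i hi => h i (by omega), h n (by omega)]

theorem revSum_add (d : ℕ → Ordl) (m n : ℕ) :
    revSum d (m + n) = revSum (fun i => d (m + i)) n + revSum d m := by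
  induction n with
  | zero => simp [revSum]
  | succ n ih => rw [← add_assoc, revSum, ih, revSum, add_assoc]

theorem revSum_eq_zero {d : ℕ → Ordl} {n : ℕ} (h : ∀ i < n, d i = 0) : revSum d n = 0 := by
  induction n with
  | zero => rfl
  | succ n ih => rw [revSum, ih fun i hi => h i (by omega), h n (by omega), add_zero]

theorem revSum_eq_natCast_sum {d : ℕ → Ordl} {v : ℕ → ℕ} {n : ℕ}
    (h : ∀ i < n, d i = (v i : Ordl)) :
    revSum d n = ((∑ i ∈ Finset.range n, v i : ℕ) : Ordl) := by
  induction n with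
  | zero => simp [revSum]
  | succ n ih =>
    rw [revSum, ih fun i hi => h i (by omega), h n (by omega), Finset.sum_range_succ, add_comm,
      Nat.cast_add, ← Nat.cast_add]

theorem revSum_le_revSum_of_subinterval (d : ℕ → Ordl) {a b r s : ℕ} (hab : a ≤ b)
    (hbs : b + s ≤ a + r) :
    revSum (fun i => d (b + i)) s ≤ revSum (fun i => d (a + i)) r := by
  obtain ⟨c, rfl⟩ := Nat.exists_eq_add_of_le hab
  obtain ⟨e, rfl⟩ : ∃ e, r = c + (s + e) := ⟨r - c - s, by omega⟩
  rw [revSum_add _ c, revSum_add _ s]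
  simp only [add_assoc]
  exact le_self_add.trans le_add_self

theorem revSum_eq_of_delayed {d e : ℕ → Ordl} {m n : ℕ} (hnm : n + 1 ≤ m) (h0 : d 0 = 0)
    (hstep : ∀ i < n, d (i + 1) = e i) (htail : ∀ i, n < i → i < m → d i = 0) :
    revSum d m = revSum e n := by
  obtain ⟨l, rfl⟩ := Nat.exists_eq_add_of_le hnm
  have hend : revSum (fun i => d (n + 1 + i)) l = 0 :=
    revSum_eq_zero fun i hi => htail _ (by omega) (by omega)
  have hmid : revSum (fun i => d (1 + i)) n = revSum e n :=
    revSum_congr fun i hi => by rw [add_comm, hstep i hi]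
  rw [revSum_add, hend, zero_add, add_comm n 1, revSum_add, hmid]
  simp [revSum, h0]

/-- The comparison `∼` of two ordinals: `<` when `strict` holds and `≤` otherwise. -/
def OrdCmp (strict : Bool) (a b : Ordl) : Prop := if strict then a < b else a ≤ b

namespace OrdCmp

variable {strict : Bool} {a b c : Ordl}

theorem le (h : OrdCmp strict a b) : a ≤ b := by
  cases strict
  · simpa [OrdCmp] using h
  · exact (show a < b by simpa [OrdCmp] using h).le

theorem trans_le (h : OrdCmp strict a b) (hbc : b ≤ c) : OrdCmp strict a c := by
  cases strict <;> simp only [OrdCmp, if_true, Bool.false_eq_true, if_false] at h ⊢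
  · exact h.trans hbc
  · exact h.trans_le hbc

theorem le_trans (hab : a ≤ b) (h : OrdCmp strict b c) : OrdCmp strict a c := by
  cases strict <;> simp only [OrdCmp, if_true, Bool.false_eq_true, if_false] at h ⊢
  · exact hab.trans h
  · exact hab.trans_lt h

end OrdCmp

/-! ### Repetitions in sequences -/

section Repeats

variable {X : Type*}

theorem exists_injOn_repeat {x : ℕ → X} {i r : ℕ} (hr : 0 < r) (hx : x i = x (i + r)) :
    ∃ a s, i ≤ a ∧ 0 < s ∧ a + s ≤ i + r ∧ x a = x (a + s) ∧ Set.InjOn x (Set.Ioc a (a + s)) := by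
  induction r using Nat.strong_induction_on generalizing i with
  | _ r ih =>
    by_cases hinj : Set.InjOn x (Set.Ioc i (i + r))
    · exact ⟨i, r, le_rfl, hr, le_rfl, hx, hinj⟩
    · obtain ⟨b, c, hib, hbc, hcr, hxbc⟩ : ∃ b c, i < b ∧ b < c ∧ c ≤ i + r ∧ x b = x c := by
        simp only [Set.InjOn, Set.mem_Ioc] at hinj
        push Not at hinj
        obtain ⟨b, hb, c, hc, hxbc, hne⟩ := hinj
        rcases lt_or_gt_of_ne hne with h | h
        · exact ⟨b, c, hb.1, h, hc.2, hxbc⟩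
        · exact ⟨c, b, hc.1, h, hb.2, hxbc.symm⟩
      obtain ⟨s, rfl⟩ := Nat.exists_eq_add_of_le hbc.le
      obtain ⟨a, t, hba, ht, hle, hxa, hinj'⟩ := ih s (by omega) (by omega) hxbc
      exact ⟨a, t, by omega, ht, by omega, hxa, hinj'⟩

theorem revSum_pos_of_repeat {x : ℕ → X} {d : ℕ → Ordl} {n : ℕ}
    (hpos : ∀ a r, 0 < r → a + r ≤ n → x a = x (a + r) → Set.InjOn x (Set.Ioc a (a + r)) →
      0 < revSum (fun i => d (a + i)) r)
    {a r : ℕ} (hr : 0 < r) (har : a + r ≤ n) (hx : x a = x (a + r)) :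
    0 < revSum (fun i => d (a + i)) r := by
  obtain ⟨b, s, hab, hs, hbs, hxb, hinj⟩ := exists_injOn_repeat hr hx
  exact (hpos b s hs (hbs.trans har) hxb hinj).trans_le
    (revSum_le_revSum_of_subinterval d hab hbs)

/-- The last element of `T` repeating an earlier `f`-value has at most `F.card` successors in `T`,
since `f` is injective on these. -/
theorem exists_late_repeat {ι : Type*} [LinearOrder ι] {T : Finset ι} {f : ι → X} {F : Finset X}
    (hF : Set.MapsTo f T F) (hcard : F.card < T.card) :
    ∃ a ∈ T, ∃ b ∈ T, a < b ∧ f a = f b ∧ T.card ≤ {t ∈ T | t ≤ b}.card + F.card := by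
  classical
  let R := {b ∈ T | ∃ a ∈ T, a < b ∧ f a = f b}
  have hR : R.Nonempty := by
    obtain ⟨a, ha, b, hb, hab, he⟩ := Finset.exists_ne_map_eq_of_card_lt_of_maps_to hcard hF
    rcases lt_or_gt_of_ne hab with h | h
    · exact ⟨b, Finset.mem_filter.2 ⟨hb, a, ha, h, he⟩⟩
    · exact ⟨a, Finset.mem_filter.2 ⟨ha, b, hb, h, he.symm⟩⟩
  obtain ⟨hb, a, ha, hab, he⟩ := Finset.mem_filter.1 (R.max'_mem hR)
  refine ⟨a, ha, _, hb, hab, he, ?_⟩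
  have hlate : {t ∈ T | ¬ t ≤ R.max' hR}.card ≤ F.card := by
    refine Finset.card_le_card_of_injOn f (fun t ht => hF (Finset.mem_filter.1 ht).1) ?_
    intro s hs t ht hst
    obtain ⟨hsT, hsR⟩ := Finset.mem_filter.1 (Finset.mem_coe.1 hs)
    obtain ⟨htT, htR⟩ := Finset.mem_filter.1 (Finset.mem_coe.1 ht)
    by_contra hne
    rcases lt_or_gt_of_ne hne with h | h
    · exact htR (R.le_max' t (Finset.mem_filter.2 ⟨htT, s, hsT, h, hst⟩))
    · exact hsR (R.le_max' s (Finset.mem_filter.2 ⟨hsT, t, htT, h, hst.symm⟩))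
  have := Finset.card_filter_add_card_filter_not (s := T) (fun t => t ≤ R.max' hR)
  omega

theorem add_card_le_of_strictMonoOn {f : ℕ → ℕ} (hf : Monotone f) {lo hi : ℕ} (hle : lo ≤ hi)
    {T : Finset ℕ} (hT : T ⊆ Finset.Icc lo hi) (hfT : StrictMonoOn f T) :
    f lo + T.card ≤ f hi + 1 := by
  have hcard : T.card ≤ (Finset.Icc (f lo) (f hi)).card :=
    Finset.card_le_card_of_injOn f (fun t ht => by
      have ht' := Finset.mem_Icc.1 (hT ht)
      exact Finset.mem_coe.2 (Finset.mem_Icc.2 ⟨hf ht'.1, hf ht'.2⟩)) hfT.injOn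
  have hlohi := hf hle
  rw [Nat.card_Icc] at hcard
  omega

end Repeats

/-! ### Walks in a graph -/

section Walks

variable {X : Type*}

/-- `x 0, …, x n` is a walk of `n` steps in the directed graph with edge relation `E`. -/
def IsWalk (E : X → X → Prop) (n : ℕ) (x : ℕ → X) : Prop := ∀ i < n, E (x i) (x (i + 1))

/-- The total of the natural edge weights `g` along the first `n` steps of `x`. -/
def walkSum (g : X → X → ℕ) (x : ℕ → X) (n : ℕ) : ℕ := ∑ i ∈ Finset.range n, g (x i) (x (i + 1))

/-- The reverse sum of the ordinal edge weights `g` along the first `n` steps of `x`. -/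
def walkWeight (g : X → X → Ordl) (x : ℕ → X) (n : ℕ) : Ordl :=
  revSum (fun i => g (x i) (x (i + 1))) n

/-- The sequence that follows `x` up to position `p` and continues there with `y`. -/
def joinAt (x : ℕ → X) (p : ℕ) (y : ℕ → X) (i : ℕ) : X := if i ≤ p then x i else y (i - p)

variable {E : X → X → Prop} {x y : ℕ → X} {p : ℕ}

theorem joinAt_of_le {i : ℕ} (h : i ≤ p) : joinAt x p y i = x i := if_pos h

theorem joinAt_add (h : x p = y 0) (i : ℕ) : joinAt x p y (p + i) = y i := by
  rcases Nat.eq_zero_or_pos i with rfl | hi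
  · simp [joinAt, h]
  · simp [joinAt, show ¬ p + i ≤ p by omega]

theorem IsWalk.mono {m n : ℕ} (hx : IsWalk E n x) (hmn : m ≤ n) : IsWalk E m x :=
  fun i hi => hx i (hi.trans_le hmn)

theorem IsWalk.drop {a n : ℕ} (hx : IsWalk E (a + n) x) : IsWalk E n fun i => x (a + i) :=
  fun i hi => hx (a + i) (by omega)

theorem IsWalk.joinAt {l : ℕ} (hx : IsWalk E p x) (hy : IsWalk E l y) (h : x p = y 0) :
    IsWalk E (p + l) (joinAt x p y) := by
  intro i hi
  rcases lt_or_ge i p with hip | hip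
  · rw [joinAt_of_le hip.le, joinAt_of_le hip]
    exact hx i hip
  · obtain ⟨j, rfl⟩ := Nat.exists_eq_add_of_le hip
    rw [joinAt_add h, add_assoc, joinAt_add h]
    exact hy j (by omega)

section WalkSum

variable (g : X → X → ℕ)

theorem walkSum_add (x : ℕ → X) (m n : ℕ) :
    walkSum g x (m + n) = walkSum g x m + walkSum g (fun i => x (m + i)) n :=
  Finset.sum_range_add _ m n

theorem walkSum_mono (x : ℕ → X) : Monotone (walkSum g x) := fun m n hmn => by
  obtain ⟨k, rfl⟩ := Nat.exists_eq_add_of_le hmn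
  rw [walkSum_add]
  omega

theorem walkSum_joinAt (h : x p = y 0) (l : ℕ) :
    walkSum g (joinAt x p y) (p + l) = walkSum g x p + walkSum g y l := by
  rw [walkSum_add]
  congr 1
  · refine Finset.sum_congr rfl fun i hi => ?_
    have hip := Finset.mem_range.1 hi
    rw [joinAt_of_le hip.le, joinAt_of_le hip]
  · simp only [joinAt_add h]

theorem walkSum_le_mul {B : ℕ} (hB : ∀ a b, g a b ≤ B) (x : ℕ → X) (n : ℕ) :
    walkSum g x n ≤ n * B := by
  simpa [walkSum] using
    Finset.sum_le_card_nsmul (Finset.range n) _ B fun i _ => hB (x i) (x (i + 1))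

end WalkSum

theorem walkWeight_joinAt (g : X → X → Ordl) (h : x p = y 0) (l : ℕ) :
    walkWeight g (joinAt x p y) (p + l) = walkWeight g y l + walkWeight g x p := by
  rw [walkWeight, revSum_add]
  congr 1
  · simp only [add_assoc, joinAt_add h, walkWeight]
  · exact revSum_congr fun i hi => by rw [joinAt_of_le hi.le, joinAt_of_le hi]

/-- Excising simple cycles, on which `g₁` and `g₂` agree, leaves a walk without repetitions, and
this has fewer than `F.card` steps. -/
theorem walkSum_le_walkSum_add {g₁ g₂ : X → X → ℕ} {x₀ : X} {F : Finset X} {B : ℕ}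
    (hB : ∀ a b, g₁ a b ≤ B)
    (hF : ∀ n x, IsWalk E n x → x 0 = x₀ → x n ∈ F)
    (hcycle : ∀ n x, IsWalk E n x → x 0 = x₀ → ∀ a r, 0 < r → a + r ≤ n → x a = x (a + r) →
      Set.InjOn x (Set.Ioc a (a + r)) →
      walkSum g₁ (fun i => x (a + i)) r = walkSum g₂ (fun i => x (a + i)) r)
    {n : ℕ} (hx : IsWalk E n x) (h0 : x 0 = x₀) :
    walkSum g₁ x n ≤ walkSum g₂ x n + F.card * B := by
  induction n using Nat.strong_induction_on generalizing x with
  | _ n ih =>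
    by_cases hinj : Set.InjOn x (Finset.range (n + 1))
    · have hcard : (Finset.range (n + 1)).card ≤ F.card :=
        Finset.card_le_card_of_injOn x (fun i hi => hF i x (hx.mono (by simpa using hi)) h0) hinj
      rw [Finset.card_range] at hcard
      calc walkSum g₁ x n ≤ n * B := walkSum_le_mul g₁ hB x n
        _ ≤ F.card * B := Nat.mul_le_mul_right _ (by omega)
        _ ≤ walkSum g₂ x n + F.card * B := Nat.le_add_left _ _
    · obtain ⟨i, r, hr, hir, hxi⟩ : ∃ i r, 0 < r ∧ i + r ≤ n ∧ x i = x (i + r) := by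
        simp only [Set.InjOn, Finset.coe_range, Set.mem_Iio] at hinj
        push Not at hinj
        obtain ⟨b, hb, c, hc, hxbc, hne⟩ := hinj
        rcases lt_or_gt_of_ne hne with h | h
        · exact ⟨b, c - b, by omega, by omega, by rwa [Nat.add_sub_cancel' h.le]⟩
        · exact ⟨c, b - c, by omega, by omega, by rw [Nat.add_sub_cancel' h.le, hxbc]⟩
      obtain ⟨a, s, -, hs, has, hxa, hsimple⟩ := exists_injOn_repeat hr hxi
      obtain ⟨l, rfl⟩ := Nat.exists_eq_add_of_le (has.trans hir)
      have hshort := ih (a + l) (by omega) ((hx.mono (by omega)).joinAt hx.drop hxa)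
        ((joinAt_of_le (Nat.zero_le a)).trans h0)
      have hagree := hcycle _ x hx h0 a s hs (by omega) hxa hsimple
      rw [walkSum_joinAt _ hxa, walkSum_joinAt _ hxa] at hshort
      rw [walkSum_add, walkSum_add g₁ x a, walkSum_add g₂, walkSum_add g₂ x a]
      omega

theorem exists_pumped_cycle {g : X → X → Ordl} {r l : ℕ} (hx : IsWalk E l x) (hrl : r ≤ l)
    (hcycle : x r = x 0) (hpos : 0 < walkWeight g x r) (M : ℕ) :
    ∃ l' y, IsWalk E l' y ∧ (∀ i ≤ r, y i = x i) ∧ y l' = x l ∧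
      (M : Ordl) ≤ walkWeight g y l' := by
  induction M with
  | zero => exact ⟨l, x, hx, fun _ _ => rfl, rfl, by simp⟩
  | succ M ih =>
    obtain ⟨l', y, hy, hagree, hend, hM⟩ := ih
    have hjoin : x r = y 0 := hcycle.trans (hagree 0 (Nat.zero_le r)).symm
    refine ⟨r + l', joinAt x r y, (hx.mono hrl).joinAt hy hjoin,
      fun i hi => joinAt_of_le hi, (joinAt_add hjoin l').trans hend, ?_⟩
    rw [walkWeight_joinAt g hjoin, Nat.cast_add, Nat.cast_one]
    exact add_le_add hM (Order.one_le_iff_pos.2 hpos)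

theorem exists_pumped_walk {g : X → X → Ordl} {a r n : ℕ} (hx : IsWalk E n x) (har : a + r ≤ n)
    (hcycle : x a = x (a + r)) (hpos : 0 < walkWeight g (fun i => x (a + i)) r) (M : ℕ) :
    ∃ n' y, IsWalk E n' y ∧ (∀ i ≤ a + r, y i = x i) ∧ y n' = x n ∧
      (M : Ordl) ≤ walkWeight g y n' := by
  obtain ⟨l, rfl⟩ := Nat.exists_eq_add_of_le ((Nat.le_add_right a r).trans har)
  obtain ⟨l', y, hy, hagree, hend, hM⟩ :=
    exists_pumped_cycle hx.drop (by omega) hcycle.symm hpos M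
  have hjoin : x a = y 0 := (hagree 0 (Nat.zero_le r)).symm
  refine ⟨a + l', joinAt x a y, (hx.mono (by omega)).joinAt hy hjoin, fun i hi => ?_,
    (joinAt_add hjoin l').trans hend, ?_⟩
  · rcases le_total i a with hia | hia
    · exact joinAt_of_le hia
    · obtain ⟨j, rfl⟩ := Nat.exists_eq_add_of_le hia
      rw [joinAt_add hjoin]
      exact hagree j (by omega)
  · rw [walkWeight_joinAt g hjoin]
    exact hM.trans le_self_add

end Walks

/-! ### Traces along paths -/

namespace PreProof

variable {S : CES} {P : PreProof S}

section Traces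

variable (P)

/-- The steps of left-hand traces, as a graph on pairs of a node and an antecedent trace value. -/
def EdgeL (a b : P.Node × S.TA) : Prop := (P.δ1 a.1 b.1 a.2 b.2).isSome

/-- The steps of right-hand traces, as a graph on pairs of a node and a consequent trace value. -/
def EdgeR (a b : P.Node × S.TC) : Prop := (P.δ2 a.1 b.1 a.2 b.2).isSome

/-- The `δ1`-value of a step of a left-hand trace; it is `0` where `δ1` is undefined. -/
def weightL (a b : P.Node × S.TA) : Ordl := (P.δ1 a.1 b.1 a.2 b.2).getD 0

/-- The `δ2`-value of a step of a right-hand trace; it is `0` where `δ2` is undefined. -/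
def weightR (a b : P.Node × S.TC) : Ordl := (P.δ2 a.1 b.1 a.2 b.2).getD 0

/-- The `δ1`-value of a step of a left-hand trace as a natural number; it is `0` where `δ1` is
undefined or infinite. -/
noncomputable def natWeightL (a b : P.Node × S.TA) : ℕ :=
  Cardinal.toNat (P.weightL a b).card

/-- The first `n` steps of `τs` form a left-hand trace from `(ν, τ)` along `νs`.  Steps are counted
here, so this trace has the length `n + 1` in the sense of `FollowsL` and `thetaL`. -/
structure IsTraceL (ν : P.Node) (τ : S.TA) (n : ℕ) (νs : ℕ → P.Node) (τs : ℕ → S.TA) : Prop where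
  start_mem : τ ∈ S.tvA (P.seqOf ν).1
  node_zero : νs 0 = ν
  value_zero : τs 0 = τ
  isWalk : IsWalk P.EdgeL n fun i => (νs i, τs i)

/-- The first `n` steps of `τs` form a right-hand trace from `(ν, τ)` along `νs`, with the
conventions of `IsTraceL`. -/
structure IsTraceR (ν : P.Node) (τ : S.TC) (n : ℕ) (νs : ℕ → P.Node) (τs : ℕ → S.TC) : Prop where
  start_mem : τ ∈ S.tvC (P.seqOf ν).2
  node_zero : νs 0 = ν
  value_zero : τs 0 = τ
  isWalk : IsWalk P.EdgeR n fun i => (νs i, τs i)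

end Traces

theorem Axiomatic.terminalR {ν : P.Node} (h : P.Axiomatic ν) (σ : S.TC) : P.TerminalR ν σ := by
  intro ν' hν'
  rw [show P.children ν = [] from h] at hν'
  exact absurd hν' List.not_mem_nil

namespace IsTraceL

variable {ν : P.Node} {τ : S.TA} {n : ℕ} {νs : ℕ → P.Node} {τs : ℕ → S.TA}

theorem mono (h : P.IsTraceL ν τ n νs τs) {m : ℕ} (hmn : m ≤ n) : P.IsTraceL ν τ m νs τs :=
  ⟨h.start_mem, h.node_zero, h.value_zero, h.isWalk.mono hmn⟩

theorem congr_path (h : P.IsTraceL ν τ n νs τs) {νs' : ℕ → P.Node} (heq : ∀ i ≤ n, νs i = νs' i) :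
    P.IsTraceL ν τ n νs' τs := by
  refine ⟨h.start_mem, (heq 0 (Nat.zero_le n)).symm.trans h.node_zero, h.value_zero, ?_⟩
  intro i hi
  simpa only [heq i hi.le, heq (i + 1) hi] using h.isWalk i hi

theorem value_mem (h : P.IsTraceL ν τ n νs τs) {i : ℕ} (hi : i ≤ n) :
    τs i ∈ S.tvA (P.seqOf (νs i)).1 := by
  cases i with
  | zero => rw [h.node_zero, h.value_zero]; exact h.start_mem
  | succ i => exact (P.δ1_dom _ _ _ _ (h.isWalk i hi)).2.2

theorem isPath (h : P.IsTraceL ν τ n νs τs) : P.IsPath (n + 1) νs :=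
  fun i hi => (P.δ1_dom _ _ _ _ (h.isWalk i (by omega))).1

theorem followsL (h : P.IsTraceL ν τ n νs τs) {m : ℕ} (hnm : n + 1 ≤ m) :
    P.FollowsL m νs (n + 1) τs :=
  ⟨hnm, fun _ hi => h.value_mem (by omega), fun i hi => h.isWalk i (by omega)⟩

theorem of_followsL {m : ℕ} (h : P.FollowsL m νs (n + 1) τs) (hν : νs 0 = ν) (hτ : τs 0 = τ) :
    P.IsTraceL ν τ n νs τs :=
  ⟨hν ▸ hτ ▸ h.2.1 0 (by omega), hν, hτ, fun i hi => h.2.2 i (by omega)⟩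

theorem reachL (h : P.IsTraceL ν τ n νs τs) {i : ℕ} (hi : i ≤ n) : P.ReachL ν τ (νs i) (τs i) :=
  ⟨i + 1, νs, τs, by omega, (h.mono hi).isPath, (h.mono hi).followsL le_rfl, h.node_zero,
    h.value_zero, rfl, rfl⟩

theorem isCycleL (h : P.IsTraceL ν τ n νs τs) {a r : ℕ} (hr : 0 < r) (har : a + r ≤ n)
    (hν : νs a = νs (a + r)) (hτ : τs a = τs (a + r)) :
    P.IsCycleL (r + 1) (fun i => νs (a + i)) (fun i => τs (a + i)) :=
  ⟨by omega, fun i hi => h.isPath (a + i) (by omega),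
    ⟨le_rfl, fun i hi => h.value_mem (by omega), fun i hi => h.isWalk (a + i) (by omega)⟩,
    hν.symm, hτ.symm⟩

end IsTraceL

namespace IsTraceR

variable {ν : P.Node} {τ : S.TC} {n : ℕ} {νs : ℕ → P.Node} {τs : ℕ → S.TC}

theorem mono (h : P.IsTraceR ν τ n νs τs) {m : ℕ} (hmn : m ≤ n) : P.IsTraceR ν τ m νs τs :=
  ⟨h.start_mem, h.node_zero, h.value_zero, h.isWalk.mono hmn⟩

theorem value_mem (h : P.IsTraceR ν τ n νs τs) {i : ℕ} (hi : i ≤ n) :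
    τs i ∈ S.tvC (P.seqOf (νs i)).2 := by
  cases i with
  | zero => rw [h.node_zero, h.value_zero]; exact h.start_mem
  | succ i => exact (P.δ2_dom _ _ _ _ (h.isWalk i hi)).2.2

theorem isPath (h : P.IsTraceR ν τ n νs τs) : P.IsPath (n + 1) νs :=
  fun i hi => (P.δ2_dom _ _ _ _ (h.isWalk i (by omega))).1

theorem followsR (h : P.IsTraceR ν τ n νs τs) : P.FollowsR (n + 1) νs (n + 1) τs :=
  ⟨le_rfl, fun _ hi => h.value_mem (by omega), fun i hi => h.isWalk i (by omega)⟩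

theorem of_followsR {m : ℕ} (h : P.FollowsR m νs (n + 1) τs) (hν : νs 0 = ν) (hτ : τs 0 = τ) :
    P.IsTraceR ν τ n νs τs :=
  ⟨hν ▸ hτ ▸ h.2.1 0 (by omega), hν, hτ, fun i hi => h.2.2 i (by omega)⟩

theorem reachR (h : P.IsTraceR ν τ n νs τs) {i : ℕ} (hi : i ≤ n) : P.ReachR ν τ (νs i) (τs i) :=
  ⟨i + 1, νs, τs, by omega, (h.mono hi).isPath, (h.mono hi).followsR, h.node_zero,
    h.value_zero, rfl, rfl⟩

theorem isCycleR (h : P.IsTraceR ν τ n νs τs) {a r : ℕ} (hr : 0 < r) (har : a + r ≤ n)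
    (hν : νs a = νs (a + r)) (hτ : τs a = τs (a + r)) :
    P.IsCycleR (r + 1) (fun i => νs (a + i)) (fun i => τs (a + i)) :=
  ⟨by omega, fun i hi => h.isPath (a + i) (by omega),
    ⟨le_rfl, fun i hi => h.value_mem (by omega), fun i hi => h.isWalk (a + i) (by omega)⟩,
    hν.symm, hτ.symm⟩

end IsTraceR

theorem thetaL_eq_walkWeight (νs : ℕ → P.Node) (τs : ℕ → S.TA) (n : ℕ) :
    P.thetaL νs τs (n + 1) = walkWeight P.weightL (fun i => (νs i, τs i)) n := rfl

theorem thetaR_eq_walkWeight (νs : ℕ → P.Node) (τs : ℕ → S.TC) (n : ℕ) :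
    P.thetaR νs τs (n + 1) = walkWeight P.weightR (fun i => (νs i, τs i)) n := rfl

theorem tvo_iff {O : OTF S} {Excl : P.Node → S.TC → Prop} {strict : Bool} {ν : P.Node} {τ : S.TA}
    {τ' : S.TC} :
    P.TVO O Excl strict ν τ τ' ↔
      ∀ n νs τs, P.IsTraceR ν τ' n νs τs → P.TerminalR (νs n) (τs n) → ¬ Excl (νs n) (τs n) →
        ∃ k σs, k ≤ n ∧ P.IsTraceL ν τ k νs σs ∧
          OrdCmp strict (P.thetaR νs τs (n + 1)) (P.thetaL νs σs (k + 1)) ∧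
          (P.Ground O (νs n) (τs n) ∨
            P.Axiomatic (νs n) ∧ k = n ∧ O.Equates (P.seqOf (νs n)) (σs n) (τs n)) := by
  constructor
  · intro htvo n νs τs hτs hterm hexcl
    obtain ⟨k, σs, hk, hkn, hσ0, hσs, hcmp, hend⟩ := htvo (n + 1) νs τs (by omega) hτs.isPath
      hτs.node_zero hτs.value_zero hτs.followsR hterm hexcl
    obtain ⟨k, rfl⟩ := Nat.exists_eq_add_of_le' hk
    refine ⟨k, σs, by omega, .of_followsL hσs hτs.node_zero hσ0, hcmp, hend.imp_right ?_⟩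
    exact fun ⟨hax, hlength, heq⟩ => ⟨hax, Nat.succ.inj hlength, heq⟩
  · intro hstep n νs τs hn _ hν hτ hτs hterm hexcl
    obtain ⟨n, rfl⟩ := Nat.exists_eq_add_of_le' hn
    obtain ⟨k, σs, hkn, hσs, hcmp, hend⟩ := hstep n νs τs (.of_followsR hτs hν hτ) hterm hexcl
    refine ⟨k + 1, σs, by omega, by omega, hσs.value_zero, hσs.followsL (by omega), hcmp,
      hend.imp_right ?_⟩
    exact fun ⟨hax, hlength, heq⟩ => ⟨hax, congrArg Nat.succ hlength, heq⟩

/-! ### Sizes of traces -/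

theorem bddAbove_natSteps :
    BddAbove {k : ℕ | ∃ ν ν' τ τ', P.δ1 ν ν' τ τ' = some (k : Ordl)} := by
  have hfin : (⋃ ν : P.Node, ⋃ ν' : P.Node, ⋃ τ ∈ S.tvA (P.seqOf ν).1,
      ⋃ τ' ∈ S.tvA (P.seqOf ν').1, {k : ℕ | P.δ1 ν ν' τ τ' = some (k : Ordl)}).Finite := by
    refine Set.finite_iUnion fun ν => Set.finite_iUnion fun ν' =>
      (Finset.finite_toSet _).biUnion fun τ _ => (Finset.finite_toSet _).biUnion fun τ' _ =>
        Set.Subsingleton.finite fun a ha b hb => ?_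
    exact_mod_cast Option.some.inj (Eq.trans (Eq.symm ha) hb)
  refine (hfin.subset ?_).bddAbove
  rintro k ⟨ν, ν', τ, τ', hk⟩
  obtain ⟨-, hτ, hτ'⟩ := P.δ1_dom ν ν' τ τ' (by rw [hk]; rfl)
  simp only [Set.mem_iUnion]
  exact ⟨ν, ν', τ, hτ, τ', hτ', hk⟩

theorem natWeightL_le_maxStepN (a b : P.Node × S.TA) : P.natWeightL a b ≤ P.maxStepN := by
  rw [natWeightL, weightL]
  cases hδ : P.δ1 a.1 b.1 a.2 b.2 with
  | none => simp
  | some o =>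
    rcases lt_or_ge o Ordinal.omega0 with ho | ho
    · obtain ⟨k, rfl⟩ := Ordinal.lt_omega0.1 ho
      simpa [maxStepN] using le_csSup bddAbove_natSteps ⟨_, _, _, _, hδ⟩
    · have hinf : Cardinal.aleph0 ≤ o.card := by
        rwa [← not_lt, Ordinal.card_lt_aleph0, not_lt]
      simp [Cardinal.toNat_apply_of_aleph0_le hinf]

theorem card_tvA_le_traceWidth (μ : P.Node) : (S.tvA (P.seqOf μ).1).card ≤ P.traceWidth :=
  (le_max_left _ _).trans (Finset.le_sup (f := fun ν : P.Node =>
    max (S.tvA (P.seqOf ν).1).card (S.tvC (P.seqOf ν).2).card) (Finset.mem_univ μ))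

theorem card_tvC_le_traceWidth (μ : P.Node) : (S.tvC (P.seqOf μ).2).card ≤ P.traceWidth :=
  (le_max_right _ _).trans (Finset.le_sup (f := fun ν : P.Node =>
    max (S.tvA (P.seqOf ν).1).card (S.tvC (P.seqOf ν).2).card) (Finset.mem_univ μ))

section Sizes

variable {ν : P.Node} {τ : S.TA} {τ' : S.TC} {n : ℕ} {νs : ℕ → P.Node}

theorem IsTraceL.stepL_eq_natWeightL {τs : ℕ → S.TA} (h : P.IsTraceL ν τ n νs τs)
    (hfin : P.FinProgL ν τ) {i : ℕ} (hi : i < n) :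
    P.stepL νs τs i = (P.natWeightL (νs i, τs i) (νs (i + 1), τs (i + 1)) : Ordl) := by
  obtain ⟨α, hα⟩ := Option.isSome_iff_exists.1 (h.isWalk i hi)
  obtain ⟨k, rfl⟩ := Ordinal.lt_omega0.1 (hfin _ _ _ _ α (h.reachL hi.le) hα)
  simp [stepL, natWeightL, weightL, show P.δ1 (νs i) (νs (i + 1)) (τs i) (τs (i + 1)) = _ from hα]

theorem IsTraceL.thetaL_drop_eq_walkSum {τs : ℕ → S.TA} (h : P.IsTraceL ν τ n νs τs)
    (hfin : P.FinProgL ν τ) {a r : ℕ} (har : a + r ≤ n) :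
    P.thetaL (fun i => νs (a + i)) (fun i => τs (a + i)) (r + 1) =
      (walkSum P.natWeightL (fun i => (νs (a + i), τs (a + i))) r : Ordl) :=
  revSum_eq_natCast_sum fun _ _ => h.stepL_eq_natWeightL hfin (by omega)

theorem IsTraceL.thetaL_eq_walkSum {τs : ℕ → S.TA} (h : P.IsTraceL ν τ n νs τs)
    (hfin : P.FinProgL ν τ) :
    P.thetaL νs τs (n + 1) = (walkSum P.natWeightL (fun i => (νs i, τs i)) n : Ordl) :=
  revSum_eq_natCast_sum fun _ hi => h.stepL_eq_natWeightL hfin hi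

theorem IsTraceL.thetaL_pos_of_repeat {τs : ℕ → S.TA} (h : P.IsTraceL ν τ n νs τs)
    (hdyn : P.Dynamic ν τ τ') {a r : ℕ} (hr : 0 < r) (har : a + r ≤ n)
    (hrep : (νs a, τs a) = (νs (a + r), τs (a + r))) :
    0 < P.thetaL (fun i => νs (a + i)) (fun i => τs (a + i)) (r + 1) := by
  refine revSum_pos_of_repeat (x := fun i => (νs i, τs i)) (d := P.stepL νs τs) ?_ hr har hrep
  intro b s hs hbs hxb hsimple
  obtain ⟨hν, hτ⟩ := Prod.mk.inj hxb
  refine hdyn.1 (s + 1) _ _ ⟨h.isCycleL hs hbs hν hτ, ?_⟩ (h.reachL (by omega))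
  rintro i j hi hij hj ⟨hνij, hτij⟩
  have := hsimple (Set.mem_Ioc.2 ⟨by omega, by omega⟩) (Set.mem_Ioc.2 ⟨by omega, by omega⟩)
    (Prod.ext hνij hτij)
  omega

theorem IsTraceR.walkWeight_pos_of_repeat {τs : ℕ → S.TC} (h : P.IsTraceR ν τ' n νs τs)
    (hdyn : P.Dynamic ν τ τ') {a r : ℕ} (hr : 0 < r) (har : a + r ≤ n)
    (hrep : (νs a, τs a) = (νs (a + r), τs (a + r))) :
    0 < walkWeight P.weightR (fun i => (νs (a + i), τs (a + i))) r := by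
  refine revSum_pos_of_repeat (x := fun i => (νs i, τs i)) (d := P.stepR νs τs) ?_ hr har hrep
  intro b s hs hbs hxb hsimple
  obtain ⟨hν, hτ⟩ := Prod.mk.inj hxb
  refine hdyn.2 (s + 1) _ _ ⟨h.isCycleR hs hbs hν hτ, ?_⟩ (h.reachR (by omega))
  rintro i j hi hij hj ⟨hνij, hτij⟩
  have := hsimple (Set.mem_Ioc.2 ⟨by omega, by omega⟩) (Set.mem_Ioc.2 ⟨by omega, by omega⟩)
    (Prod.ext hνij hτij)
  omega

theorem IsTraceL.walkSum_lt_of_repeat {τs : ℕ → S.TA} (h : P.IsTraceL ν τ n νs τs)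
    (hfin : P.FinProgL ν τ) (hdyn : P.Dynamic ν τ τ') {a b : ℕ} (hab : a < b) (hbn : b ≤ n)
    (hrep : (νs a, τs a) = (νs b, τs b)) :
    walkSum P.natWeightL (fun i => (νs i, τs i)) a <
      walkSum P.natWeightL (fun i => (νs i, τs i)) b := by
  obtain ⟨r, rfl⟩ := Nat.exists_eq_add_of_le hab.le
  have hpos := h.thetaL_pos_of_repeat hdyn (by omega) hbn hrep
  rw [h.thetaL_drop_eq_walkSum hfin hbn] at hpos
  rw [walkSum_add]
  exact Nat.lt_add_of_pos_right (by exact_mod_cast hpos)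

theorem IsTraceL.walkSum_eq_of_injOn_repeat {τs τs' : ℕ → S.TA} (h : P.IsTraceL ν τ n νs τs)
    (h' : P.IsTraceL ν τ n νs τs') (hfin : P.FinProgL ν τ) (hbal : P.Balanced ν τ) {a r : ℕ}
    (hr : 0 < r) (har : a + r ≤ n) (hν : νs a = νs (a + r)) (hτ : τs a = τs (a + r))
    (hτ' : τs' a = τs' (a + r))
    (hsimple : Set.InjOn (fun i => (νs i, τs i, τs' i)) (Set.Ioc a (a + r))) :
    walkSum P.natWeightL (fun i => (νs (a + i), τs (a + i))) r =
      walkSum P.natWeightL (fun i => (νs (a + i), τs' (a + i))) r := by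
  have hcycle : P.IsSimpleBinCycleL (r + 1) (fun i => νs (a + i)) (fun i => τs (a + i))
      (fun i => τs' (a + i)) := by
    refine ⟨h.isCycleL hr har hν hτ, h'.isCycleL hr har hν hτ', ?_⟩
    rintro i j hi hij hj ⟨hνij, hτij, hτ'ij⟩
    have := hsimple (Set.mem_Ioc.2 ⟨by omega, by omega⟩) (Set.mem_Ioc.2 ⟨by omega, by omega⟩)
      (Prod.ext hνij (Prod.ext hτij hτ'ij))
    omega
  have hsize := hbal _ _ _ _ hcycle (h.reachL (i := a) (by omega)) (h'.reachL (by omega))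
  rw [h.thetaL_drop_eq_walkSum hfin har, h'.thetaL_drop_eq_walkSum hfin har] at hsize
  exact_mod_cast hsize

theorem IsTraceL.walkSum_le_walkSum_add {τs τs' : ℕ → S.TA} (h : P.IsTraceL ν τ n νs τs)
    (h' : P.IsTraceL ν τ n νs τs') (hfin : P.FinProgL ν τ) (hbal : P.Balanced ν τ) :
    walkSum P.natWeightL (fun i => (νs i, τs i)) n ≤
      walkSum P.natWeightL (fun i => (νs i, τs' i)) n + P.cycThreshold * P.maxStepN := by
  let fstL : P.Node × S.TA × S.TA → P.Node × S.TA := fun x => (x.1, x.2.1)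
  let sndL : P.Node × S.TA × S.TA → P.Node × S.TA := fun x => (x.1, x.2.2)
  let F : Finset (P.Node × S.TA × S.TA) := (Finset.univ.sigma fun μ : P.Node =>
    S.tvA (P.seqOf μ).1 ×ˢ S.tvA (P.seqOf μ).1).map (Equiv.sigmaEquivProd _ _).toEmbedding
  have hFcard : F.card = P.cycThreshold := by
    simp only [F, Finset.card_map, Finset.card_sigma, Finset.card_product, cycThreshold]
  have traces : ∀ {m : ℕ} {x : ℕ → P.Node × S.TA × S.TA},
      IsWalk (fun a b => P.EdgeL (fstL a) (fstL b) ∧ P.EdgeL (sndL a) (sndL b)) m x →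
      x 0 = (ν, τ, τ) → P.IsTraceL ν τ m (fun i => (x i).1) (fun i => (x i).2.1) ∧
        P.IsTraceL ν τ m (fun i => (x i).1) (fun i => (x i).2.2) := fun hx hx0 =>
    ⟨⟨h.start_mem, by simp [hx0], by simp [hx0], fun i hi => (hx i hi).1⟩,
      ⟨h.start_mem, by simp [hx0], by simp [hx0], fun i hi => (hx i hi).2⟩⟩
  rw [← hFcard]
  refine _root_.walkSum_le_walkSum_add (x := fun i => (νs i, τs i, τs' i)) (x₀ := (ν, τ, τ))
    (E := fun a b => P.EdgeL (fstL a) (fstL b) ∧ P.EdgeL (sndL a) (sndL b))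
    (g₁ := fun a b => P.natWeightL (fstL a) (fstL b))
    (g₂ := fun a b => P.natWeightL (sndL a) (sndL b))
    (fun a b => natWeightL_le_maxStepN _ _) (fun m x hx hx0 => ?_)
    (fun m x hx hx0 a r hr har hrep hsimple => ?_)
    (fun i hi => ⟨h.isWalk i hi, h'.isWalk i hi⟩)
    (by simp only [h.node_zero, h.value_zero, h'.value_zero])
  · obtain ⟨h₁, h₂⟩ := traces hx hx0
    simpa [F] using ⟨h₁.value_mem le_rfl, h₂.value_mem le_rfl⟩
  · obtain ⟨h₁, h₂⟩ := traces hx hx0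
    exact h₁.walkSum_eq_of_injOn_repeat h₂ hfin hbal hr har (by rw [hrep]) (by rw [hrep])
      (by rw [hrep]) hsimple

end Sizes

/-! ### Long left-hand traces -/

section LongTraces

variable {O : OTF S} {Excl : P.Node → S.TC → Prop} {strict : Bool}
  {ν : P.Node} {τ : S.TA} {τ' : S.TC} {n : ℕ} {νs : ℕ → P.Node} {τs : ℕ → S.TC}

/-- Pumping the repetition makes the right-hand trace so large that the left-hand trace dominating
it must run past the repetition, up to which the pumped path agrees with the original one. -/
theorem IsTraceR.exists_isTraceL_of_repeat (hτs : P.IsTraceR ν τ' n νs τs)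
    (hterm : P.TerminalR (νs n) (τs n)) (hexcl : ¬ Excl (νs n) (τs n))
    (htvo : P.TVO O Excl strict ν τ τ') (hfin : P.FinProgL ν τ) (hdyn : P.Dynamic ν τ τ')
    {a b : ℕ} (hab : a < b) (hbn : b ≤ n) (hrep : (νs a, τs a) = (νs b, τs b)) :
    ∃ ρs, P.IsTraceL ν τ b νs ρs := by
  obtain ⟨r, rfl⟩ := Nat.exists_eq_add_of_le hab.le
  obtain ⟨n', y, hy, hagree, hend, hlarge⟩ := exists_pumped_walk hτs.isWalk hbn hrep
    (hτs.walkWeight_pos_of_repeat hdyn (by omega) hbn hrep) ((a + r) * P.maxStepN + 1)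
  have hy0 : y 0 = (ν, τ') := by rw [hagree 0 (by omega), hτs.node_zero, hτs.value_zero]
  have hytrace : P.IsTraceR ν τ' n' (fun i => (y i).1) (fun i => (y i).2) :=
    ⟨hτs.start_mem, by simp [hy0], by simp [hy0], hy⟩
  obtain ⟨k, ρs, -, hρs, hcmp, -⟩ := tvo_iff.1 htvo n' _ _ hytrace (by simpa [hend] using hterm)
    (by simpa [hend] using hexcl)
  have hsize : (a + r) * P.maxStepN + 1 ≤ k * P.maxStepN := by
    have := hlarge.trans hcmp.le
    rw [hρs.thetaL_eq_walkSum hfin, Nat.cast_le] at this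
    exact this.trans (walkSum_le_mul _ natWeightL_le_maxStepN _ _)
  have hlong : a + r ≤ k := le_of_not_gt fun hk => by
    have := Nat.mul_le_mul_right P.maxStepN hk.le
    omega
  exact ⟨ρs, (hρs.mono hlong).congr_path fun i hi => by rw [hagree i hi]⟩

theorem IsTraceL.walkSum_add_le_of_visits {ρs : ℕ → S.TA} (hρs : P.IsTraceL ν τ n νs ρs)
    (hfin : P.FinProgL ν τ) (hdyn : P.Dynamic ν τ τ') {lo c : ℕ} (hlo : lo ≤ n) {μ : P.Node}
    {T : Finset ℕ} (hT : T ⊆ Finset.Icc lo n) (hμ : ∀ t ∈ T, νs t = μ)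
    (hcard : P.traceWidth * c < T.card) :
    walkSum P.natWeightL (fun i => (νs i, ρs i)) lo + c ≤
      walkSum P.natWeightL (fun i => (νs i, ρs i)) n := by
  classical
  obtain ⟨σ, -, hfiber⟩ := Finset.exists_lt_card_fiber_of_mul_lt_card_of_maps_to
    (t := S.tvA (P.seqOf μ).1) (f := ρs) (n := c)
    (fun t ht => hμ t ht ▸ hρs.value_mem (Finset.mem_Icc.1 (hT ht)).2)
    ((Nat.mul_le_mul_right c (card_tvA_le_traceWidth μ)).trans_lt hcard)
  have hstrict : StrictMonoOn (walkSum P.natWeightL fun i => (νs i, ρs i))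
      ({t ∈ T | ρs t = σ} : Finset ℕ) := by
    intro s hs t ht hst
    obtain ⟨hsT, hsσ⟩ := Finset.mem_filter.1 hs
    obtain ⟨htT, htσ⟩ := Finset.mem_filter.1 ht
    exact hρs.walkSum_lt_of_repeat hfin hdyn hst (Finset.mem_Icc.1 (hT htT)).2
      (by rw [hμ s hsT, hμ t htT, hsσ, htσ])
  have := add_card_le_of_strictMonoOn (walkSum_mono P.natWeightL fun i => (νs i, ρs i)) hlo
    ((Finset.filter_subset _ _).trans hT) hstrict
  omega

theorem IsTraceL.exists_longer (hτs : P.IsTraceR ν τ' n νs τs)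
    (hterm : P.TerminalR (νs n) (τs n)) (hexcl : ¬ Excl (νs n) (τs n))
    (htvo : P.TVO O Excl strict ν τ τ') (hfin : P.FinProgL ν τ) (hdyn : P.Dynamic ν τ τ')
    (hbal : P.Balanced ν τ) {k : ℕ} {σs : ℕ → S.TA} (hσs : P.IsTraceL ν τ k νs σs)
    (hvisits : P.cycThreshold * P.maxStepN * P.traceWidth + P.traceWidth <
      cnt νs (νs (k + 1)) (k + 1) (n + 1)) :
    ∃ b ρs, k < b ∧ b ≤ n ∧ P.IsTraceL ν τ b νs ρs ∧
      P.thetaL νs σs (k + 1) ≤ P.thetaL νs ρs (b + 1) := by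
  classical
  let T : Finset ℕ := {t ∈ Finset.Ico (k + 1) (n + 1) | νs t = νs (k + 1)}
  have hT : ∀ t ∈ T, k < t ∧ t ≤ n ∧ νs t = νs (k + 1) := fun t ht => by
    simp only [T, Finset.mem_filter, Finset.mem_Ico] at ht
    exact ⟨by omega, by omega, ht.2⟩
  have hTcard : P.cycThreshold * P.maxStepN * P.traceWidth + P.traceWidth < T.card := by
    unfold cnt at hvisits
    convert hvisits
  have hwidth := card_tvC_le_traceWidth (νs (k + 1))
  obtain ⟨a, ha, b, hb, hab, hτab, hlate⟩ := exists_late_repeat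
    (F := S.tvC (P.seqOf (νs (k + 1))).2)
    (fun t ht => by rw [← (hT t ht).2.2]; exact hτs.value_mem (hT t ht).2.1) (by omega)
  obtain ⟨hkb, hbn, hνb⟩ := hT b hb
  obtain ⟨ρs, hρs⟩ := hτs.exists_isTraceL_of_repeat hterm hexcl htvo hfin hdyn hab hbn
    (by rw [(hT a ha).2.2, hνb, hτab])
  refine ⟨b, ρs, hkb, hbn, hρs, ?_⟩
  have hgain := hρs.walkSum_add_le_of_visits hfin hdyn (lo := k + 1)
    (c := P.cycThreshold * P.maxStepN) (T := {t ∈ T | t ≤ b}) hkb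
    (fun t ht => by
      obtain ⟨htT, htb⟩ := Finset.mem_filter.1 ht
      exact Finset.mem_Icc.2 ⟨(hT t htT).1, htb⟩)
    (fun t ht => (hT t (Finset.mem_filter.1 ht).1).2.2)
    (by rw [mul_comm P.traceWidth]; omega)
  have hbalance := hσs.walkSum_le_walkSum_add (hρs.mono hkb.le) hfin hbal
  have hmono := walkSum_mono P.natWeightL (fun i => (νs i, ρs i)) (show k ≤ k + 1 by omega)
  rw [hσs.thetaL_eq_walkSum hfin, hρs.thetaL_eq_walkSum hfin, Nat.cast_le]
  omega

/-- A longest dominating left-hand trace cannot be extended, so the node after its end is visited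
few times from there on. -/
theorem TVO.exists_isTraceL_cnt_le (htvo : P.TVO O Excl strict ν τ τ') (hfin : P.FinProgL ν τ)
    (hdyn : P.Dynamic ν τ τ') (hbal : P.Balanced ν τ) (hτs : P.IsTraceR ν τ' n νs τs)
    (hterm : P.TerminalR (νs n) (τs n)) (hexcl : ¬ Excl (νs n) (τs n)) :
    ∃ k σs, k ≤ n ∧ P.IsTraceL ν τ k νs σs ∧
      OrdCmp strict (P.thetaR νs τs (n + 1)) (P.thetaL νs σs (k + 1)) ∧
      (k < n → cnt νs (νs (k + 1)) (k + 1) (n + 1) ≤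
        P.cycThreshold * P.maxStepN * P.traceWidth + P.traceWidth) := by
  classical
  let Dominates : ℕ → Prop := fun k => ∃ σs, P.IsTraceL ν τ k νs σs ∧
    OrdCmp strict (P.thetaR νs τs (n + 1)) (P.thetaL νs σs (k + 1))
  obtain ⟨k₀, σs₀, hk₀, hσs₀, hcmp₀, -⟩ := tvo_iff.1 htvo n νs τs hτs hterm hexcl
  obtain ⟨σs, hσs, hcmp⟩ :=
    Nat.findGreatest_spec (P := Dominates) hk₀ ⟨σs₀, hσs₀, hcmp₀⟩
  refine ⟨_, σs, Nat.findGreatest_le n, hσs, hcmp, fun _ => ?_⟩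
  by_contra! hvisits
  obtain ⟨b, ρs, hlt, hbn, hρs, hle⟩ :=
    hσs.exists_longer hτs hterm hexcl htvo hfin hdyn hbal hvisits
  exact (Nat.le_findGreatest hbn ⟨ρs, hρs, hcmp.trans_le hle⟩).not_gt hlt

end LongTraces

end PreProof

/-! ### Quantitative languages -/

section Languages

variable {Q A : Type*}

/-- The values of the accepting runs of a weighted automaton on the first `m` letters of `w`. -/
def acceptedValues (T : Q → A → Q → Prop) (q0 : Q) (F : Q → Prop) (wt : Q → A → Q → Ordl) (m : ℕ)
    (w : ℕ → A) : Set Ordl :=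
  {v | ∃ q, IsRun T q0 m w q ∧ F (q m) ∧ v = runVal wt m w q}

variable {T : Q → A → Q → Prop} {q0 : Q} {F : Q → Prop} {wt : Q → A → Q → Ordl} {m : ℕ} {w : ℕ → A}

theorem finite_acceptedValues (hT : ∀ q a, {q' | T q a q'}.Finite) :
    (acceptedValues T q0 F wt m w).Finite := by
  have hfin : {p : Q × Ordl | ∃ q, IsRun T q0 m w q ∧ p = (q m, runVal wt m w q)}.Finite := by
    induction m with
    | zero =>
      refine (Set.finite_singleton (q0, (0 : Ordl))).subset ?_
      rintro _ ⟨q, hq, rfl⟩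
      exact Prod.ext hq.1 rfl
    | succ m ih =>
      refine (ih.biUnion fun p _ =>
        (hT p.1 (w m)).image fun q' => (q', wt p.1 (w m) q' + p.2)).subset ?_
      rintro _ ⟨q, hq, rfl⟩
      exact Set.mem_biUnion ⟨q, ⟨hq.1, fun i hi => hq.2 i (by omega)⟩, rfl⟩
        ⟨q (m + 1), hq.2 m (by omega), rfl⟩
  refine (hfin.image Prod.snd).subset ?_
  rintro _ ⟨q, hq, -, rfl⟩
  exact ⟨_, ⟨q, hq, rfl⟩, rfl⟩

theorem lang_eq_none (h : acceptedValues T q0 F wt m w = ∅) : Lang T q0 F wt m w = none :=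
  if_neg fun ⟨q, hq, hF⟩ => Set.eq_empty_iff_forall_notMem.1 h _ ⟨q, hq, hF, rfl⟩

theorem lang_eq_some (h : (acceptedValues T q0 F wt m w).Nonempty) :
    Lang T q0 F wt m w = some (sSup (acceptedValues T q0 F wt m w)) :=
  if_pos (let ⟨_, q, hq, hF, _⟩ := h; ⟨q, hq, hF⟩)

theorem optOrd_none_left (strict : Bool) (x : Option Ordl) : OptOrd strict none x := by
  cases strict <;> trivial

theorem not_optOrd_some_none (strict : Bool) (a : Ordl) : ¬ OptOrd strict (some a) none := by
  cases strict <;> exact id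

theorem optOrd_some_some {strict : Bool} {a b : Ordl} :
    OptOrd strict (some a) (some b) ↔ OrdCmp strict a b := by
  cases strict <;> rfl

theorem optOrd_lang_iff {Q' : Type*} {T' : Q' → A → Q' → Prop} {q0' : Q'} {F' : Q' → Prop}
    {wt' : Q' → A → Q' → Ordl} {strict : Bool} (hT : ∀ q a, {q' | T q a q'}.Finite)
    (hT' : ∀ q a, {q' | T' q a q'}.Finite) :
    OptOrd strict (Lang T q0 F wt m w) (Lang T' q0' F' wt' m w) ↔
      ∀ a ∈ acceptedValues T q0 F wt m w, ∃ b ∈ acceptedValues T' q0' F' wt' m w,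
        OrdCmp strict a b := by
  have hfin := finite_acceptedValues (q0 := q0) (F := F) (wt := wt) (m := m) (w := w) hT
  have hfin' := finite_acceptedValues (q0 := q0') (F := F') (wt := wt') (m := m) (w := w) hT'
  rcases Set.eq_empty_or_nonempty (acceptedValues T q0 F wt m w) with hV | hV
  · simp [lang_eq_none hV, optOrd_none_left, hV]
  rcases Set.eq_empty_or_nonempty (acceptedValues T' q0' F' wt' m w) with hV' | hV'
  · obtain ⟨a, ha⟩ := hV
    rw [lang_eq_some ⟨a, ha⟩, lang_eq_none hV']
    refine iff_of_false (not_optOrd_some_none _ _) fun h => ?_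
    obtain ⟨b, hb, -⟩ := h a ha
    exact Set.eq_empty_iff_forall_notMem.1 hV' b hb
  · rw [lang_eq_some hV, lang_eq_some hV', optOrd_some_some]
    refine ⟨fun h a ha => ⟨_, hV'.csSup_mem hfin', h.le_trans (le_csSup hfin.bddAbove ha)⟩,
      fun h => ?_⟩
    obtain ⟨b, hb, hcmp⟩ := h _ (hV.csSup_mem hfin)
    exact hcmp.trans_le (le_csSup hfin'.bddAbove hb)

theorem isRun_iff_prefix {q : ℕ → Q} {k : ℕ} (hkm : k ≤ m) :
    IsRun T q0 m w q ↔
      IsRun T q0 k w q ∧ ∀ i, k ≤ i → i < m → T (q i) (w i) (q (i + 1)) := by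
  refine ⟨fun h => ⟨⟨h.1, fun i hi => h.2 i (by omega)⟩, fun i _ hi => h.2 i hi⟩, fun h => ?_⟩
  refine ⟨h.1.1, fun i hi => ?_⟩
  rcases lt_or_ge i k with hik | hik
  · exact h.1.2 i hik
  · exact h.2 i hik hi

/-- The state sequence that starts at `q0`, is at `p i` after reading the letter at position
`i ≤ k`, and at `s i` after reading a later one. -/
def runThrough (q0 : Q) (p : ℕ → Q) (k : ℕ) (s : ℕ → Q) : ℕ → Q
  | 0 => q0
  | i + 1 => if i ≤ k then p i else s i

theorem runThrough_succ_of_le {p s : ℕ → Q} {k i : ℕ} (h : i ≤ k) :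
    runThrough q0 p k s (i + 1) = p i := if_pos h

theorem runThrough_succ_of_lt {p s : ℕ → Q} {k i : ℕ} (h : k < i) :
    runThrough q0 p k s (i + 1) = s i := if_neg h.not_ge

end Languages

theorem exists_forall_iff_le {p : ℕ → Prop} {m : ℕ} (h0 : p 0) (hp : ∀ i < m, p (i + 1) → p i) :
    ∃ k ≤ m, ∀ i ≤ m, p i ↔ i ≤ k := by
  induction m with
  | zero => exact ⟨0, le_rfl, fun i hi => by simp [Nat.le_zero.1 hi, h0]⟩
  | succ m ih =>
    obtain ⟨k, hkm, hk⟩ := ih fun i hi => hp i (by omega)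
    by_cases hlast : p (m + 1)
    · have hmk := (hk m le_rfl).1 (hp m (by omega) hlast)
      refine ⟨m + 1, le_rfl, fun i hi => iff_of_true ?_ hi⟩
      rcases Nat.le_succ_iff.1 hi with him | rfl
      · exact (hk i him).2 (him.trans hmk)
      · exact hlast
    · refine ⟨k, by omega, fun i hi => ?_⟩
      rcases Nat.le_succ_iff.1 hi with him | rfl
      · exact hk i him
      · exact iff_of_false hlast (by omega)

section Unfoldings

variable {Q A X : Type*}

/-- The automaton with transitions `T` and initial state `q0` traverses the graph `E` on `X` from
`x₀`, visiting `x` in the state `pair x` upon reading `letter x`.  It may leave the graph for other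
states, from which it never returns. -/
structure IsUnfolding (T : Q → A → Q → Prop) (q0 : Q) (pair : X → Q) (letter : X → A)
    (E : X → X → Prop) (x₀ : X) : Prop where
  pair_injective : Function.Injective pair
  init_iff : ∀ {a r}, T q0 a r ↔ a = letter x₀ ∧ r = pair x₀
  pair_iff : ∀ {x a y}, T (pair x) a (pair y) ↔ a = letter y ∧ E x y
  not_to_init : ∀ {r a}, ¬ T r a q0
  of_to_pair : ∀ {r a y}, T r a (pair y) → r = q0 ∨ ∃ x, r = pair x

variable {T : Q → A → Q → Prop} {q0 : Q} {pair : X → Q} {letter : X → A} {E : X → X → Prop}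
  {x₀ : X} {w : ℕ → A} {q : ℕ → Q} {x : ℕ → X} {k m : ℕ}

theorem IsUnfolding.isRun_iff (hT : IsUnfolding T q0 pair letter E x₀) (h0 : q 0 = q0)
    (hq : ∀ i ≤ k, q (i + 1) = pair (x i)) :
    IsRun T q0 (k + 1) w q ↔
      x 0 = x₀ ∧ IsWalk E k x ∧ ∀ i ≤ k, w i = letter (x i) := by
  have hfirst : T (q 0) (w 0) (q 1) ↔ w 0 = letter x₀ ∧ x 0 = x₀ := by
    rw [h0, hT.init_iff, hq 0 (Nat.zero_le k), hT.pair_injective.eq_iff]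
  have hnext : ∀ i < k, (T (q (i + 1)) (w (i + 1)) (q (i + 1 + 1)) ↔
      w (i + 1) = letter (x (i + 1)) ∧ E (x i) (x (i + 1))) :=
    fun i hi => by rw [hq i hi.le, hq (i + 1) hi, hT.pair_iff]
  constructor
  · intro hrun
    obtain ⟨hw0, hx0⟩ := hfirst.1 (hrun.2 0 (by omega))
    have hsteps := fun i hi => (hnext i hi).1 (hrun.2 (i + 1) (by omega))
    refine ⟨hx0, fun i hi => (hsteps i hi).2, fun i hi => ?_⟩
    cases i with
    | zero => rw [hw0, hx0]
    | succ i => exact (hsteps i hi).1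
  · rintro ⟨hx0, hx, hw⟩
    refine ⟨h0, fun i hi => ?_⟩
    cases i with
    | zero => exact hfirst.2 ⟨hx0 ▸ hw 0 (Nat.zero_le k), hx0⟩
    | succ i => exact (hnext i (by omega)).2 ⟨hw _ (by omega), hx i (by omega)⟩

theorem IsUnfolding.exists_last_pair (hT : IsUnfolding T q0 pair letter E x₀)
    (hrun : IsRun T q0 (m + 1) w q) :
    ∃ (k : ℕ) (x : ℕ → X), k ≤ m ∧ (∀ i ≤ k, q (i + 1) = pair (x i)) ∧
      ∀ i, k < i → i ≤ m → ∀ y, q (i + 1) ≠ pair y := by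
  obtain ⟨k, hkm, hk⟩ := exists_forall_iff_le (p := fun i => ∃ y, q (i + 1) = pair y) (m := m)
    ⟨x₀, (hT.init_iff.1 (hrun.1 ▸ hrun.2 0 (by omega))).2⟩ fun i hi ⟨y, hy⟩ =>
      (hT.of_to_pair (hy ▸ hrun.2 (i + 1) (by omega))).resolve_left fun hinit =>
        hT.not_to_init (hinit ▸ hrun.2 i (by omega))
  have hpairs : ∀ i, ∃ y, i ≤ k → q (i + 1) = pair y := fun i => by
    by_cases hik : i ≤ k
    · exact ((hk i (hik.trans hkm)).2 hik).imp fun y hy _ => hy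
    · exact ⟨x₀, fun h => absurd h hik⟩
  choose x hx using hpairs
  exact ⟨k, x, hkm, hx, fun i hki him y hy => hki.not_ge ((hk i him).1 ⟨y, hy⟩)⟩

theorem runVal_eq_walkWeight {wt : Q → A → Q → Ordl} {g : X → X → Ordl}
    (hpair : ∀ x a y, wt (pair x) a (pair y) = g x y)
    (hinit : ∀ a r, wt q0 a r = 0)
    (hsink : ∀ r a r', (∀ y, r' ≠ pair y) → wt r a r' = 0) (hkm : k + 1 ≤ m) (h0 : q 0 = q0)
    (hq : ∀ i ≤ k, q (i + 1) = pair (x i))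
    (hlast : ∀ i, k < i → i < m → ∀ y, q (i + 1) ≠ pair y) :
    runVal wt m w q = walkWeight g x k :=
  revSum_eq_of_delayed hkm (by rw [h0, hinit])
    (fun i hi => by rw [hq i hi.le, hq (i + 1) hi, hpair])
    fun i hki him => hsink _ _ _ (hlast i hki him)

end Unfoldings

section Count

variable {A : Type*} {w : ℕ → A} {a : A} {lo hi : ℕ}

theorem cnt_succ_of_eq (hle : lo ≤ hi) (h : w hi = a) :
    cnt w a lo (hi + 1) = cnt w a lo hi + 1 := by
  classical
  unfold cnt
  rw [← Finset.insert_Ico_right_eq_Ico_add_one hle, Finset.filter_insert, if_pos h,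
    Finset.card_insert_of_notMem (by simp)]

theorem cnt_succ_of_ne (hle : lo ≤ hi) (h : w hi ≠ a) : cnt w a lo (hi + 1) = cnt w a lo hi := by
  classical
  unfold cnt
  rw [← Finset.insert_Ico_right_eq_Ico_add_one hle, Finset.filter_insert, if_neg h]

theorem cnt_mono {hi' : ℕ} (h : hi ≤ hi') : cnt w a lo hi ≤ cnt w a lo hi' := by
  classical
  exact Finset.card_le_card (Finset.filter_subset_filter _ (Finset.Ico_subset_Ico_right h))

theorem cnt_self (w : ℕ → A) (lo : ℕ) : cnt w (w lo) lo (lo + 1) = 1 := by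
  rw [cnt_succ_of_eq le_rfl rfl]
  simp [cnt]

end Count

/-! ### Runs of the consequent automaton -/

section ConsequentAutomaton

variable {S : CES} {P : PreProof S} {O : OTF S} {Excl : P.Node → S.TC → Prop}
  {ν : P.Node} {τ' : S.TC} {k m : ℕ} {w : ℕ → Sig P} {q : ℕ → BState P.Node S.TC}
  {νs : ℕ → P.Node} {τs : ℕ → S.TC}

theorem isUnfolding_bTrans :
    IsUnfolding (BTrans P O Excl ν τ') .init (fun x : P.Node × S.TC => .pair x.1 x.2)
      (fun x => Sum.inl x.1) P.EdgeR (ν, τ') where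
  pair_injective x y h := by
    obtain ⟨h₁, h₂⟩ := BState.pair.inj h
    exact Prod.ext h₁ h₂
  init_iff := ⟨by rintro ⟨⟩; exact ⟨rfl, rfl⟩, by rintro ⟨rfl, rfl⟩; exact .start⟩
  pair_iff := ⟨by rintro (_ | ⟨-, hδ⟩); exact ⟨rfl, hδ⟩,
    by rintro ⟨rfl, hδ⟩; exact .step (P.δ2_dom _ _ _ _ hδ).1 hδ⟩
  not_to_init := by rintro _ _ ⟨⟩
  of_to_pair := by
    rintro _ _ _ (_ | _)
    · exact .inl rfl
    · exact .inr ⟨(_, _), rfl⟩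

theorem runVal_bwt_eq_thetaR (hkm : k + 1 ≤ m) (h0 : q 0 = .init)
    (hq : ∀ i ≤ k, q (i + 1) = .pair (νs i) (τs i))
    (hlast : ∀ i, k < i → i < m → ∀ y : P.Node × S.TC, q (i + 1) ≠ .pair y.1 y.2) :
    runVal (Bwt P) m w q = P.thetaR νs τs (k + 1) := by
  rw [P.thetaR_eq_walkWeight]
  refine runVal_eq_walkWeight (pair := fun x : P.Node × S.TC => .pair x.1 x.2) (fun _ _ _ => rfl)
    (fun _ _ => rfl) (fun r a r' hr' => ?_) hkm h0 hq hlast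
  cases r <;> cases r' <;> first | rfl | exact absurd rfl (hr' (_, _))

theorem bTrans_pair_bot_iff {a : Sig P} {μ : P.Node} {σ : S.TC} (hσ : σ ∈ S.tvC (P.seqOf μ).2) :
    BTrans P O Excl ν τ' (.pair μ σ) a .bot ↔
      a = Sum.inr (P.Tset O μ σ, σ) ∧ P.Axiomatic μ ∧ ¬ P.Ground O μ σ ∧ ¬ Excl μ σ := by
  constructor
  · rintro (_ | _ | ⟨hax, -, hground, hexcl⟩)
    exact ⟨rfl, hax, hground, hexcl⟩
  · rintro ⟨rfl, hax, hground, hexcl⟩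
    exact .toBot hax hσ hground hexcl

theorem not_bTrans_bot {a : Sig P} {r : BState P.Node S.TC} :
    ¬ BTrans P O Excl ν τ' .bot a r := by
  rintro ⟨⟩

theorem finite_setOf_bTrans (r : BState P.Node S.TC) (a : Sig P) :
    {r' | BTrans P O Excl ν τ' r a r'}.Finite := by
  have hfin : ({.bot, .pair ν τ'} ∪ ⋃ μ : P.Node, BState.pair μ ''
      (S.tvC (P.seqOf μ).2 : Set S.TC)).Finite :=
    (Set.toFinite _).union (Set.finite_iUnion fun μ => (Finset.finite_toSet _).image _)
  refine hfin.subset ?_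
  rintro _ (_ | ⟨-, hδ⟩ | _)
  · exact .inl (by simp)
  · exact .inr (Set.mem_iUnion.2 ⟨_, _, (P.δ2_dom _ _ _ _ hδ).2.2, rfl⟩)
  · exact .inl (by simp)

theorem bFinal_pair_iff {μ : P.Node} {σ : S.TC} :
    BFinal P O Excl (.pair μ σ) ↔
      P.TerminalR μ σ ∧ ¬ Excl μ σ ∧ (P.Axiomatic μ → P.Ground O μ σ) := by
  have hterm : P.Axiomatic μ → P.TerminalR μ σ := fun hax => hax.terminalR σ
  simp only [BFinal]
  tauto

theorem isRun_bTrans_iff (hτ' : τ' ∈ S.tvC (P.seqOf ν).2) (h0 : q 0 = .init)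
    (hq : ∀ i ≤ k, q (i + 1) = .pair (νs i) (τs i)) :
    IsRun (BTrans P O Excl ν τ') .init (k + 1) w q ↔
      P.IsTraceR ν τ' k νs τs ∧ ∀ i ≤ k, w i = Sum.inl (νs i) := by
  rw [isUnfolding_bTrans.isRun_iff (x := fun i => (νs i, τs i)) h0 hq, Prod.mk.injEq]
  exact ⟨fun ⟨⟨hν, hτ⟩, hwalk, hw⟩ => ⟨⟨hτ', hν, hτ, hwalk⟩, hw⟩,
    fun ⟨hτs, hw⟩ => ⟨⟨hτs.node_zero, hτs.value_zero⟩, hτs.isWalk, hw⟩⟩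

theorem exists_isTraceR_of_isRun (hτ' : τ' ∈ S.tvC (P.seqOf ν).2)
    (hrun : IsRun (BTrans P O Excl ν τ') .init (m + 1) w q) :
    ∃ n νs τs, P.IsTraceR ν τ' n νs τs ∧ (∀ i ≤ n, w i = Sum.inl (νs i)) ∧
      (∀ i ≤ n, q (i + 1) = .pair (νs i) (τs i)) ∧ (m = n ∨ m = n + 1 ∧ q (n + 2) = .bot) := by
  obtain ⟨n, x, hnm, hx, hlast⟩ := isUnfolding_bTrans.exists_last_pair hrun
  obtain ⟨hτs, hw⟩ := (isRun_bTrans_iff hτ' hrun.1 hx).1 ((isRun_iff_prefix (by omega)).1 hrun).1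
  refine ⟨n, _, _, hτs, hw, hx, ?_⟩
  rcases hnm.eq_or_lt with rfl | hnm
  · exact .inl rfl
  · have hbot : q (n + 2) = .bot := by
      have hstep := hrun.2 (n + 1) (by omega)
      have hnotpair := hlast (n + 1) (by omega) (by omega)
      generalize q (n + 1 + 1) = r at hstep hnotpair ⊢
      cases hr : r with
      | init => exact absurd (hr ▸ hstep) isUnfolding_bTrans.not_to_init
      | pair μ σ => exact absurd hr (hnotpair (μ, σ))
      | bot => rfl
    refine .inr ⟨le_antisymm (le_of_not_gt fun hlt => ?_) hnm, hbot⟩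
    exact not_bTrans_bot (hbot ▸ hrun.2 (n + 2) (by omega))

theorem exists_of_mem_acceptedValues_bTrans {v : Ordl} (hτ' : τ' ∈ S.tvC (P.seqOf ν).2)
    (hv : v ∈ acceptedValues (BTrans P O Excl ν τ') .init (BFinal P O Excl) (Bwt P) m w) :
    ∃ n νs τs, P.IsTraceR ν τ' n νs τs ∧ (∀ i ≤ n, w i = Sum.inl (νs i)) ∧
      P.TerminalR (νs n) (τs n) ∧ ¬ Excl (νs n) (τs n) ∧ v = P.thetaR νs τs (n + 1) ∧
      (m = n + 1 ∨ m = n + 2 ∧ w (n + 1) = Sum.inr (P.Tset O (νs n) (τs n), τs n) ∧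
        P.Axiomatic (νs n) ∧ ¬ P.Ground O (νs n) (τs n)) := by
  obtain ⟨q, hrun, hfinal, rfl⟩ := hv
  cases m with
  | zero => exact (hrun.1 ▸ hfinal : BFinal P O Excl .init).elim
  | succ m =>
    obtain ⟨n, νs, τs, hτs, hw, hq, rfl | ⟨rfl, hbot⟩⟩ := exists_isTraceR_of_isRun hτ' hrun
    · rw [hq m le_rfl, bFinal_pair_iff] at hfinal
      exact ⟨m, νs, τs, hτs, hw, hfinal.1, hfinal.2.1,
        runVal_bwt_eq_thetaR le_rfl hrun.1 hq fun i hi hi' => by omega, .inl rfl⟩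
    · have hstep := hrun.2 (n + 1) (by omega)
      rw [hq n le_rfl, hbot, bTrans_pair_bot_iff (hτs.value_mem le_rfl)] at hstep
      obtain ⟨hletter, hax, hground, hexcl⟩ := hstep
      refine ⟨n, νs, τs, hτs, hw, hax.terminalR _, hexcl, ?_, .inr ⟨rfl, hletter, hax, hground⟩⟩
      refine runVal_bwt_eq_thetaR (by omega) hrun.1 hq fun i hi hi' => ?_
      obtain rfl : i = n + 1 := by omega
      simp [hbot]

theorem thetaR_mem_acceptedValues_of_ground {n : ℕ} (hτs : P.IsTraceR ν τ' n νs τs)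
    (hw : ∀ i ≤ n, w i = Sum.inl (νs i)) (hterm : P.TerminalR (νs n) (τs n))
    (hexcl : ¬ Excl (νs n) (τs n)) (hground : P.Axiomatic (νs n) → P.Ground O (νs n) (τs n)) :
    P.thetaR νs τs (n + 1) ∈
      acceptedValues (BTrans P O Excl ν τ') .init (BFinal P O Excl) (Bwt P) (n + 1) w := by
  let q := runThrough .init (fun i => BState.pair (νs i) (τs i)) n fun _ => .bot
  have hq : ∀ i ≤ n, q (i + 1) = .pair (νs i) (τs i) := fun i hi => runThrough_succ_of_le hi
  refine ⟨q, (isRun_bTrans_iff hτs.start_mem rfl hq).2 ⟨hτs, hw⟩, ?_,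
    (runVal_bwt_eq_thetaR le_rfl rfl hq fun i hi hi' => by omega).symm⟩
  rw [hq n le_rfl]
  exact bFinal_pair_iff.2 ⟨hterm, hexcl, hground⟩

theorem thetaR_mem_acceptedValues_of_not_ground {n : ℕ} (hτs : P.IsTraceR ν τ' n νs τs)
    (hw : ∀ i ≤ n, w i = Sum.inl (νs i))
    (hletter : w (n + 1) = Sum.inr (P.Tset O (νs n) (τs n), τs n)) (hax : P.Axiomatic (νs n))
    (hexcl : ¬ Excl (νs n) (τs n)) (hground : ¬ P.Ground O (νs n) (τs n)) :
    P.thetaR νs τs (n + 1) ∈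
      acceptedValues (BTrans P O Excl ν τ') .init (BFinal P O Excl) (Bwt P) (n + 2) w := by
  let q := runThrough .init (fun i => BState.pair (νs i) (τs i)) n fun _ => .bot
  have hq : ∀ i ≤ n, q (i + 1) = .pair (νs i) (τs i) := fun i hi => runThrough_succ_of_le hi
  have hbot : ∀ i, n < i → q (i + 1) = .bot := fun i hi => runThrough_succ_of_lt hi
  refine ⟨q, (isRun_iff_prefix (k := n + 1) (by omega)).2
    ⟨(isRun_bTrans_iff hτs.start_mem rfl hq).2 ⟨hτs, hw⟩, fun i hi hi' => ?_⟩, ?_, ?_⟩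
  · obtain rfl : i = n + 1 := by omega
    rw [hq n le_rfl, hbot _ hi]
    exact (bTrans_pair_bot_iff (hτs.value_mem le_rfl)).2 ⟨hletter, hax, hground, hexcl⟩
  · rw [hbot _ (by omega)]
    trivial
  · exact (runVal_bwt_eq_thetaR (by omega) rfl hq fun i hi _ => by simp [hbot i hi]).symm

theorem bGrounded_iff (hτ' : τ' ∈ S.tvC (P.seqOf ν).2) :
    BGrounded P O Excl ν τ' ↔
      ∀ n νs τs, P.IsTraceR ν τ' n νs τs → P.TerminalR (νs n) (τs n) → ¬ Excl (νs n) (τs n) →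
        ¬ P.Axiomatic (νs n) → P.Ground O (νs n) (τs n) := by
  constructor
  · intro hgrounded n νs τs hτs hterm hexcl hax
    let q := runThrough .init (fun i => BState.pair (νs i) (τs i)) n fun _ => .bot
    have hq : ∀ i ≤ n, q (i + 1) = .pair (νs i) (τs i) := fun i hi => runThrough_succ_of_le hi
    exact hgrounded _ _ ⟨n + 1, fun i => Sum.inl (νs i), q,
      (isRun_bTrans_iff hτ' rfl hq).2 ⟨hτs, fun _ _ => rfl⟩, hq n le_rfl,
      bFinal_pair_iff.2 ⟨hterm, hexcl, fun h => absurd h hax⟩⟩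
  · rintro htraces μ σ ⟨m, w, q, hrun, hpair, hfinal⟩
    obtain ⟨hterm, hexcl, hground⟩ := bFinal_pair_iff.1 hfinal
    cases m with
    | zero => exact absurd (hrun.1.symm.trans hpair) (by simp)
    | succ m =>
      obtain ⟨n, νs, τs, hτs, -, hq, rfl | ⟨rfl, hbot⟩⟩ := exists_isTraceR_of_isRun hτ' hrun
      · obtain ⟨rfl, rfl⟩ := BState.pair.inj ((hq m le_rfl).symm.trans hpair)
        by_cases hax : P.Axiomatic (νs m)
        · exact hground hax
        · exact htraces m νs τs hτs hterm hexcl hax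
      · exact absurd (hbot.symm.trans hpair) (by simp)

end ConsequentAutomaton

/-! ### Runs of the approximate antecedent automaton -/

section AntecedentAutomaton

variable {S : CES} {P : PreProof S} {O : OTF S} {N : ℕ} {ν : P.Node} {τ : S.TA} {k m n : ℕ}
  {w : ℕ → Sig P} {q : ℕ → AState P.Node S.TA} {νs : ℕ → P.Node} {σs : ℕ → S.TA}

theorem isUnfolding_aTransN :
    IsUnfolding (ATransN P O N ν τ) .init (fun x : P.Node × S.TA => .pair x.1 x.2)
      (fun x => Sum.inl x.1) P.EdgeL (ν, τ) where
  pair_injective x y h := by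
    obtain ⟨h₁, h₂⟩ := AState.pair.inj h
    exact Prod.ext h₁ h₂
  init_iff := ⟨by rintro ⟨⟩; exact ⟨rfl, rfl⟩, by rintro ⟨rfl, rfl⟩; exact .start⟩
  pair_iff := ⟨by rintro (_ | ⟨-, hδ⟩); exact ⟨rfl, hδ⟩,
    by rintro ⟨rfl, hδ⟩; exact .step (P.δ1_dom _ _ _ _ hδ).1 hδ⟩
  not_to_init := by rintro _ _ ⟨⟩
  of_to_pair := by
    rintro _ _ _ (_ | _)
    · exact .inl rfl
    · exact .inr ⟨(_, _), rfl⟩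

theorem runVal_awt_eq_thetaL (hkm : k + 1 ≤ m) (h0 : q 0 = .init)
    (hq : ∀ i ≤ k, q (i + 1) = .pair (νs i) (σs i))
    (hlast : ∀ i, k < i → i < m → ∀ y : P.Node × S.TA, q (i + 1) ≠ .pair y.1 y.2) :
    runVal (Awt P) m w q = P.thetaL νs σs (k + 1) := by
  rw [P.thetaL_eq_walkWeight]
  refine runVal_eq_walkWeight (pair := fun x : P.Node × S.TA => .pair x.1 x.2) (fun _ _ _ => rfl)
    (fun _ _ => rfl) (fun r a r' hr' => ?_) hkm h0 hq hlast
  cases r <;> cases r' <;> first | rfl | exact absurd rfl (hr' (_, _))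

theorem finite_setOf_aTransN (r : AState P.Node S.TA) (a : Sig P) :
    {r' | ATransN P O N ν τ r a r'}.Finite := by
  have hfin : ({.bot, .pair ν τ} ∪ (⋃ μ : P.Node, AState.pair μ '' (S.tvA (P.seqOf μ).1 : Set S.TA))
      ∪ ⋃ μ : P.Node, AState.topn μ '' Set.Iic (N + 1)).Finite :=
    ((Set.toFinite _).union (Set.finite_iUnion fun μ => (Finset.finite_toSet _).image _)).union
      (Set.finite_iUnion fun μ => (Set.finite_Iic _).image _)
  refine hfin.subset ?_
  rintro _ (_ | ⟨-, hδ⟩ | _ | _ | ⟨-, hi, -⟩ | ⟨-, hi⟩)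
  · exact .inl (.inl (by simp))
  · exact .inl (.inr (Set.mem_iUnion.2 ⟨_, _, (P.δ1_dom _ _ _ _ hδ).2.2, rfl⟩))
  · exact .inl (.inl (by simp))
  all_goals exact .inr (Set.mem_iUnion.2 ⟨_, _, Set.mem_Iic.2 (by omega), rfl⟩)

theorem exists_pair_of_aTransN_inr {r r' : AState P.Node S.TA} {V : Set S.TA} {σ' : S.TC}
    (h : ATransN P O N ν τ r (Sum.inr (V, σ')) r') :
    ∃ μ σ, r = .pair μ σ ∧ O.Equates (P.seqOf μ) σ σ' := by
  cases h with
  | toBot _ _ hσ => exact ⟨_, _, rfl, hσ.2⟩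

theorem isRun_aTransN_iff (hτ : τ ∈ S.tvA (P.seqOf ν).1) (h0 : q 0 = .init)
    (hq : ∀ i ≤ k, q (i + 1) = .pair (νs i) (σs i)) :
    IsRun (ATransN P O N ν τ) .init (k + 1) w q ↔
      P.IsTraceL ν τ k νs σs ∧ ∀ i ≤ k, w i = Sum.inl (νs i) := by
  rw [isUnfolding_aTransN.isRun_iff (x := fun i => (νs i, σs i)) h0 hq, Prod.mk.injEq]
  exact ⟨fun ⟨⟨hν, hτ₀⟩, hwalk, hw⟩ => ⟨⟨hτ, hν, hτ₀, hwalk⟩, hw⟩,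
    fun ⟨hσs, hw⟩ => ⟨⟨hσs.node_zero, hσs.value_zero⟩, hσs.isWalk, hw⟩⟩

theorem exists_isTraceL_of_isRun (hτ : τ ∈ S.tvA (P.seqOf ν).1)
    (hw : ∀ i ≤ n, w i = Sum.inl (νs i))
    (hrun : IsRun (ATransN P O N ν τ) .init (m + 1) w q)
    (hletter : ∀ i, n < i → i ≤ m → ∀ μ, w i ≠ Sum.inl μ) :
    ∃ k σs, k ≤ n ∧ P.IsTraceL ν τ k νs σs ∧ (∀ i ≤ k, q (i + 1) = .pair (νs i) (σs i)) ∧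
      (∀ i, k < i → i ≤ m → ∀ y : P.Node × S.TA, q (i + 1) ≠ .pair y.1 y.2) ∧
      runVal (Awt P) (m + 1) w q = P.thetaL νs σs (k + 1) := by
  obtain ⟨k, x, hkm, hx, hlast⟩ := isUnfolding_aTransN.exists_last_pair hrun
  obtain ⟨hxs, hwx⟩ := (isRun_aTransN_iff hτ hrun.1 hx).1 ((isRun_iff_prefix (by omega)).1 hrun).1
  have hkn : k ≤ n := le_of_not_gt fun hnk => hletter k hnk hkm _ (hwx k le_rfl)
  have hnode : ∀ i ≤ k, (x i).1 = νs i := fun i hi =>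
    Sum.inl.inj ((hwx i hi).symm.trans (hw i (hi.trans hkn)))
  have hq : ∀ i ≤ k, q (i + 1) = .pair (νs i) (x i).2 := fun i hi => by rw [hx i hi, hnode i hi]
  exact ⟨k, fun i => (x i).2, hkn, hxs.congr_path hnode, hq, hlast,
    runVal_awt_eq_thetaL (by omega) hrun.1 hq fun i hki him => hlast i hki (by omega)⟩

theorem exists_of_mem_acceptedValues_path {v : Ordl} (hτ : τ ∈ S.tvA (P.seqOf ν).1)
    (hw : ∀ i ≤ n, w i = Sum.inl (νs i))
    (hv : v ∈ acceptedValues (ATransN P O N ν τ) .init AFinal (Awt P) (n + 1) w) :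
    ∃ k σs, k ≤ n ∧ P.IsTraceL ν τ k νs σs ∧ v = P.thetaL νs σs (k + 1) := by
  obtain ⟨q, hrun, -, rfl⟩ := hv
  obtain ⟨k, σs, hkn, hσs, -, -, hval⟩ :=
    exists_isTraceL_of_isRun hτ hw hrun fun i hi hi' => by omega
  exact ⟨k, σs, hkn, hσs, hval⟩

theorem mem_acceptedValues_axiom_iff {v : Ordl} {σ' : S.TC} (hτ : τ ∈ S.tvA (P.seqOf ν).1)
    (hw : ∀ i ≤ n, w i = Sum.inl (νs i)) (hax : P.Axiomatic (νs n))
    (hσ' : σ' ∈ S.tvC (P.seqOf (νs n)).2)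
    (hletter : w (n + 1) = Sum.inr (P.Tset O (νs n) σ', σ')) :
    v ∈ acceptedValues (ATransN P O N ν τ) .init AFinal (Awt P) (n + 2) w ↔
      ∃ σs, P.IsTraceL ν τ n νs σs ∧ O.Equates (P.seqOf (νs n)) (σs n) σ' ∧
        v = P.thetaL νs σs (n + 1) := by
  constructor
  · rintro ⟨q, hrun, -, rfl⟩
    obtain ⟨k, σs, hkn, hσs, hq, hlast, hval⟩ :=
      exists_isTraceL_of_isRun hτ hw hrun fun i hi hi' μ => by
        obtain rfl : i = n + 1 := by omega
        simp [hletter]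
    have hstep := hrun.2 (n + 1) (by omega)
    rw [hletter] at hstep
    obtain ⟨μ, σ, hpair, hσ⟩ := exists_pair_of_aTransN_inr hstep
    obtain rfl : k = n := le_antisymm hkn <| le_of_not_gt fun hkn =>
      hlast n hkn (by omega) (μ, σ) hpair
    obtain ⟨rfl, rfl⟩ := AState.pair.inj ((hq k le_rfl).symm.trans hpair)
    exact ⟨σs, hσs, hσ, hval⟩
  · rintro ⟨σs, hσs, hequates, rfl⟩
    let q := runThrough .init (fun i => AState.pair (νs i) (σs i)) n fun _ => .bot
    have hq : ∀ i ≤ n, q (i + 1) = .pair (νs i) (σs i) := fun i hi => runThrough_succ_of_le hi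
    have hbot : ∀ i, n < i → q (i + 1) = .bot := fun i hi => runThrough_succ_of_lt hi
    refine ⟨q, (isRun_iff_prefix (k := n + 1) (by omega)).2
      ⟨(isRun_aTransN_iff hτ rfl hq).2 ⟨hσs, hw⟩, fun i hi hi' => ?_⟩, ?_, ?_⟩
    · obtain rfl : i = n + 1 := by omega
      rw [hq n le_rfl, hbot _ hi, hletter]
      exact .toBot hax hσ' ⟨hσs.value_mem le_rfl, hequates⟩
    · simp [AFinal, hbot (n + 1) (by omega)]
    · exact (runVal_awt_eq_thetaL (by omega) rfl hq fun i hi _ => by simp [hbot i hi]).symm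

theorem aTransN_topn_cnt {μ : P.Node} {lo i : ℕ} (hlo : lo ≤ i) (hpos : 0 < cnt νs μ lo i)
    (hN : cnt νs μ lo (i + 1) ≤ N) :
    ATransN P O N ν τ (.topn μ (cnt νs μ lo i)) (Sum.inl (νs i))
      (.topn μ (cnt νs μ lo (i + 1))) := by
  by_cases hμ : νs i = μ
  · subst hμ
    rw [cnt_succ_of_eq hlo rfl] at hN ⊢
    exact .topnStep hpos (by omega)
  · rw [cnt_succ_of_ne hlo hμ] at hN ⊢
    exact .topnStay hpos hN hμ

theorem thetaL_mem_acceptedValues_path (hw : ∀ i ≤ n, w i = Sum.inl (νs i))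
    (hpath : P.IsPath (n + 1) νs) (hkn : k ≤ n) (hσs : P.IsTraceL ν τ k νs σs)
    (hcnt : k < n → cnt νs (νs (k + 1)) (k + 1) (n + 1) ≤ N) :
    P.thetaL νs σs (k + 1) ∈
      acceptedValues (ATransN P O N ν τ) .init AFinal (Awt P) (n + 1) w := by
  let sink : ℕ → AState P.Node S.TA := fun i =>
    .topn (νs (k + 1)) (cnt νs (νs (k + 1)) (k + 1) (i + 1))
  let q := runThrough .init (fun i => AState.pair (νs i) (σs i)) k sink
  have hq : ∀ i ≤ k, q (i + 1) = .pair (νs i) (σs i) := fun i hi => runThrough_succ_of_le hi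
  have hsink : ∀ i, k < i → q (i + 1) = sink i := fun i hi => runThrough_succ_of_lt hi
  refine ⟨q, (isRun_iff_prefix (k := k + 1) (by omega)).2
    ⟨(isRun_aTransN_iff hσs.start_mem rfl hq).2 ⟨hσs, fun i hi => hw i (hi.trans hkn)⟩,
      fun i hi hi' => ?_⟩, ?_, ?_⟩
  · rw [hw i (by omega), hsink i hi]
    rcases hi.eq_or_lt with rfl | hi
    · rw [hq k le_rfl]
      simp only [sink, cnt_self]
      exact .toTopn (hpath k (by omega))
    · obtain ⟨i, rfl⟩ := Nat.exists_eq_add_of_le' (show 1 ≤ i by omega)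
      rw [hsink i (by omega)]
      have hpos : 0 < cnt νs (νs (k + 1)) (k + 1) (i + 1) := by
        have := cnt_mono (w := νs) (a := νs (k + 1)) (lo := k + 1) (show k + 1 + 1 ≤ i + 1 by omega)
        rw [cnt_self] at this
        omega
      exact aTransN_topn_cnt (by omega) hpos ((cnt_mono (by omega)).trans (hcnt (by omega)))
  · rcases hkn.eq_or_lt with rfl | hkn
    · simp [AFinal, hq k le_rfl]
    · simp [AFinal, hsink n hkn, sink]
  · exact (runVal_awt_eq_thetaL (by omega) rfl hq fun i hi _ => by simp [hsink i hi, sink]).symm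

end AntecedentAutomaton

/-! ### The equivalence -/

section Equivalence

variable {S : CES} {P : PreProof S} {O : OTF S} {Excl : P.Node → S.TC → Prop} {strict : Bool}
  {ν : P.Node} {τ : S.TA} {τ' : S.TC} {N : ℕ}

theorem bGrounded_of_tvo (hτ' : τ' ∈ S.tvC (P.seqOf ν).2) (htvo : P.TVO O Excl strict ν τ τ') :
    BGrounded P O Excl ν τ' := by
  refine (bGrounded_iff hτ').2 fun n νs τs hτs hterm hexcl hax => ?_
  obtain ⟨-, -, -, -, -, hground | ⟨hax', -⟩⟩ := PreProof.tvo_iff.1 htvo n νs τs hτs hterm hexcl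
  · exact hground
  · exact absurd hax' hax

theorem exists_mem_acceptedValues_aTransN_of_tvo (hτ : τ ∈ S.tvA (P.seqOf ν).1)
    (hτ' : τ' ∈ S.tvC (P.seqOf ν).2) (hfin : P.FinProgL ν τ) (hdyn : P.Dynamic ν τ τ')
    (hbal : P.Balanced ν τ)
    (hN : P.cycThreshold * P.maxStepN * P.traceWidth + P.traceWidth ≤ N)
    (htvo : P.TVO O Excl strict ν τ τ') {m : ℕ} {w : ℕ → Sig P} {a : Ordl}
    (ha : a ∈ acceptedValues (BTrans P O Excl ν τ') .init (BFinal P O Excl) (Bwt P) m w) :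
    ∃ b ∈ acceptedValues (ATransN P O N ν τ) .init AFinal (Awt P) m w, OrdCmp strict a b := by
  obtain ⟨n, νs, τs, hτs, hw, hterm, hexcl, rfl, rfl | ⟨rfl, hletter, hax, hground⟩⟩ :=
    exists_of_mem_acceptedValues_bTrans hτ' ha
  · obtain ⟨k, σs, hkn, hσs, hcmp, hcnt⟩ :=
      htvo.exists_isTraceL_cnt_le hfin hdyn hbal hτs hterm hexcl
    exact ⟨_, thetaL_mem_acceptedValues_path hw hτs.isPath hkn hσs fun hk => (hcnt hk).trans hN,
      hcmp⟩
  · obtain ⟨k, σs, -, hσs, hcmp, hground' | ⟨-, rfl, hequates⟩⟩ :=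
      PreProof.tvo_iff.1 htvo n νs τs hτs hterm hexcl
    · exact absurd hground' hground
    · exact ⟨_, (mem_acceptedValues_axiom_iff hτ hw hax (hτs.value_mem le_rfl) hletter).2
        ⟨σs, hσs, hequates, rfl⟩, hcmp⟩

theorem tvo_of_forall_exists_mem_acceptedValues (hτ : τ ∈ S.tvA (P.seqOf ν).1)
    (hτ' : τ' ∈ S.tvC (P.seqOf ν).2) (hgrounded : BGrounded P O Excl ν τ')
    (hdom : ∀ m w,
      ∀ a ∈ acceptedValues (BTrans P O Excl ν τ') .init (BFinal P O Excl) (Bwt P) m w,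
        ∃ b ∈ acceptedValues (ATransN P O N ν τ) .init AFinal (Awt P) m w, OrdCmp strict a b) :
    P.TVO O Excl strict ν τ τ' := by
  refine PreProof.tvo_iff.2 fun n νs τs hτs hterm hexcl => ?_
  by_cases hax : P.Axiomatic (νs n) ∧ ¬ P.Ground O (νs n) (τs n)
  · let w : ℕ → Sig P := fun i =>
      if i ≤ n then Sum.inl (νs i) else Sum.inr (P.Tset O (νs n) (τs n), τs n)
    have hw : ∀ i ≤ n, w i = Sum.inl (νs i) := fun i hi => if_pos hi
    have hletter : w (n + 1) = Sum.inr (P.Tset O (νs n) (τs n), τs n) := if_neg (by omega)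
    obtain ⟨b, hb, hcmp⟩ := hdom (n + 2) w _
      (thetaR_mem_acceptedValues_of_not_ground hτs hw hletter hax.1 hexcl hax.2)
    obtain ⟨σs, hσs, hequates, rfl⟩ :=
      (mem_acceptedValues_axiom_iff hτ hw hax.1 (hτs.value_mem le_rfl) hletter).1 hb
    exact ⟨n, σs, le_rfl, hσs, hcmp, .inr ⟨hax.1, rfl, hequates⟩⟩
  · have hground : P.Ground O (νs n) (τs n) := by
      by_cases hax' : P.Axiomatic (νs n)
      · exact by_contra fun h => hax ⟨hax', h⟩
      · exact (bGrounded_iff hτ').1 hgrounded n νs τs hτs hterm hexcl hax'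
    obtain ⟨b, hb, hcmp⟩ := hdom (n + 1) (fun i => Sum.inl (νs i)) _
      (thetaR_mem_acceptedValues_of_ground hτs (fun _ _ => rfl) hterm hexcl fun _ => hground)
    obtain ⟨k, σs, hkn, hσs, rfl⟩ := exists_of_mem_acceptedValues_path hτ (fun _ _ => rfl) hb
    exact ⟨k, σs, hkn, hσs, hcmp, .inl hground⟩

end Equivalence

theorem restricted_automata_equivalence_general
    {S : CES} {P : PreProof S} {O : OTF S} {Excl : P.Node → S.TC → Prop}
    (_hExcl : P.ExclOK O Excl) {ν : P.Node} {τ : S.TA} {τ' : S.TC}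
    (hτ : τ ∈ S.tvA (P.seqOf ν).1) (hτ' : τ' ∈ S.tvC (P.seqOf ν).2)
    (hfpL : P.FinProgL ν τ) (hdyn : P.Dynamic ν τ τ') (hbal : P.Balanced ν τ) (strict : Bool)
    {N : ℕ} (hN : P.cycThreshold * P.maxStepN * P.traceWidth + P.traceWidth ≤ N) :
    ((∀ (m : ℕ) (w : ℕ → Sig P),
        OptOrd strict (LangB P O Excl ν τ' m w) (LangAN P O N ν τ m w)) ∧
      BGrounded P O Excl ν τ') ↔
    P.TVO O Excl strict ν τ τ' := by
  simp only [LangB, LangAN, optOrd_lang_iff finite_setOf_bTrans finite_setOf_aTransN]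
  exact ⟨fun ⟨hdom, hgrounded⟩ => tvo_of_forall_exists_mem_acceptedValues hτ hτ' hgrounded hdom,
    fun htvo => ⟨fun _ _ _ ha =>
      exists_mem_acceptedValues_aTransN_of_tvo hτ hτ' hfpL hdyn hbal hN htvo ha,
      bGrounded_of_tvo hτ' htvo⟩⟩

/-- **Restricted Automata Equivalence.**
If the cyclic proof `P` is finitely progressing, dynamic and balanced with
respect to `ν`, `τ ∈ TraceVals_𝒜(ν)` and `τ' ∈ TraceVals_𝒞(ν)`, and
`N = 2 + C(P)·maxStep(P)·W(P) + W(P)`, then for `∼ ∈ {<, ≤}` (given by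
`strict`): `L_ℬ ∼ L_{𝒜(N)}` and `ℬ` grounded, iff `τ' ∼^ν_P τ`. -/
theorem restricted_automata_equivalence
    (S : CES) (P : PreProof S) (O : OTF S)
    (Excl : P.Node → S.TC → Prop) (hExcl : P.ExclOK O Excl)
    (hproof : P.IsCyclicProof)
    (ν : P.Node) (τ : S.TA) (τ' : S.TC)
    (hτ : τ ∈ S.tvA (P.seqOf ν).1) (hτ' : τ' ∈ S.tvC (P.seqOf ν).2)
    (hfpL : P.FinProgL ν τ) (hfpR : P.FinProgR ν τ')
    (hdyn : P.Dynamic ν τ τ') (hbal : P.Balanced ν τ)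
    (strict : Bool) :
    ((∀ (m : ℕ) (w : ℕ → Sig P),
        OptOrd strict (LangB P O Excl ν τ' m w)
          (LangAN P O (2 + P.cycThreshold * P.maxStepN * P.traceWidth + P.traceWidth)
            ν τ m w)) ∧
      BGrounded P O Excl ν τ') ↔
    P.TVO O Excl strict ν τ τ' := by
  exact restricted_automata_equivalence_general hExcl hτ hτ' hfpL hdyn hbal strict (by omega)
end

section
/- Runs of the Antecedent Automaton: If ν⃗_{1..n} is a path in a cyclic proof P and ρ : q_𝒜 →^{ν⃗} q_n is a run of the weighted automaton 𝒜^{(P,ν)}_{(τ,τ')}, then there exists a left-hand trace τ⃗_{1..k} with k ≤ n and τ⃗_1 = τ such that q_i = (ν⃗_i, τ⃗_i) for each i ∈ {1,…,k} and q_j = ⊤ for each j ∈ {k+1,…,n}. Moreover, if q_n = (ν⃗_n, τ'') for some trace value τ'', then k = n and τ'' = τ⃗_n. -/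
/-!
Reading a node letter `μ` always leads to `⊤` or to a pair state over `μ`, and `⊤` is absorbing.
Hence a run over a word of nodes consists of pair states over the letters read, up to the first
visit to `⊤`, and of `⊤` from then on. Two consecutive pair states are joined by a `δ1`-step, so
the trace values of the pair states form a left-hand trace; it starts at `τ` because the only
transition out of the initial state does.
-/

namespace ATrans

variable {S : CES} {P : PreProof S} {O : OTF S} {ν0 : P.Node} {τ : S.TA}

theorem init_left_iff {a : Sig P} {s : AState P.Node S.TA} :
    ATrans P O ν0 τ .init a s ↔ a = Sum.inl ν0 ∧ s = .pair ν0 τ := by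
  constructor
  · rintro ⟨⟩
    exact ⟨rfl, rfl⟩
  · rintro ⟨rfl, rfl⟩
    exact .start

theorem eq_top_of_top_left {a : Sig P} {s : AState P.Node S.TA}
    (h : ATrans P O ν0 τ .top a s) : s = .top := by
  cases h
  rfl

theorem eq_top_or_exists_eq_pair {s s' : AState P.Node S.TA} {μ : P.Node}
    (h : ATrans P O ν0 τ s (Sum.inl μ) s') : s' = .top ∨ ∃ σ, s' = .pair μ σ := by
  cases h with
  | start | step => exact .inr ⟨_, rfl⟩
  | toTop | topLoop => exact .inl rfl

theorem isSome_δ1 {a : Sig P} {μ μ' : P.Node} {σ σ' : S.TA}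
    (h : ATrans P O ν0 τ (.pair μ σ) a (.pair μ' σ')) : (P.δ1 μ μ' σ σ').isSome := by
  cases h with
  | step _ hδ => exact hδ

end ATrans

namespace IsRun

theorem eq_of_absorbing {Q A : Type*} {T : Q → A → Q → Prop} {q0 s : Q} {m : ℕ} {w : ℕ → A}
    {q : ℕ → Q} (hrun : IsRun T q0 m w q) (hs : ∀ a t, T s a t → t = s) {i j : ℕ}
    (hi : q i = s) (hij : i ≤ j) (hjm : j ≤ m) : q j = s := by
  induction j, hij using Nat.le_induction with
  | base => exact hi
  | succ j _ ih => exact hs _ _ (ih (by omega) ▸ hrun.2 j hjm)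

variable {S : CES} {P : PreProof S} {O : OTF S} {ν0 : P.Node} {τ : S.TA}
  {q0 : AState P.Node S.TA} {n : ℕ} {νs : ℕ → P.Node} {q : ℕ → AState P.Node S.TA}

theorem exists_eq_pair_and_eq_top
    (hrun : IsRun (ATrans P O ν0 τ) q0 n (fun i => Sum.inl (νs i)) q) :
    ∃ k ≤ n, ∃ τs : ℕ → S.TA, (∀ i < k, q (i + 1) = .pair (νs i) (τs i)) ∧
      ∀ j, k ≤ j → j < n → q (j + 1) = .top := by
  classical
  have : Nonempty S.TA := ⟨τ⟩
  have hstate (i : ℕ) (hi : i < n) : q (i + 1) = .top ∨ ∃ σ, q (i + 1) = .pair (νs i) σ :=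
    (hrun.2 i hi).eq_top_or_exists_eq_pair
  have hex : ∃ i, i < n → q (i + 1) = .top := ⟨n, fun h => absurd h n.lt_irrefl⟩
  have hbefore (i : ℕ) (hi : i < Nat.find hex) : ∃ σ, q (i + 1) = .pair (νs i) σ := by
    obtain ⟨hin, htop⟩ := Classical.not_imp.mp (Nat.find_min hex hi)
    exact (hstate i hin).resolve_left htop
  choose! τs hτs using hbefore
  refine ⟨Nat.find hex, Nat.find_min' hex fun h => absurd h n.lt_irrefl, τs, hτs,
    fun j hkj hjn => ?_⟩
  have hfirst : q (Nat.find hex + 1) = .top := Nat.find_spec hex (hkj.trans_lt hjn)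
  exact hrun.eq_of_absorbing (fun _ _ => ATrans.eq_top_of_top_left) hfirst (by omega) hjn

theorem followsL (hrun : IsRun (ATrans P O ν0 τ) q0 n (fun i => Sum.inl (νs i)) q) {k : ℕ}
    {τs : ℕ → S.TA} (hkn : k ≤ n) (hpair : ∀ i < k, q (i + 1) = .pair (νs i) (τs i))
    (hτs : τs 0 ∈ S.tvA (P.seqOf (νs 0)).1) : P.FollowsL n νs k τs := by
  have hδ (i : ℕ) (hi : i + 1 < k) :
      (P.δ1 (νs i) (νs (i + 1)) (τs i) (τs (i + 1))).isSome := by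
    have htrans := hrun.2 (i + 1) (by omega)
    rw [hpair i (by omega), hpair (i + 1) hi] at htrans
    exact htrans.isSome_δ1
  refine ⟨hkn, fun i hi => ?_, hδ⟩
  cases i with
  | zero => exact hτs
  | succ i => exact (P.δ1_dom _ _ _ _ (hδ i hi)).2.2

theorem letter_zero_eq_and_state_one_eq
    (hrun : IsRun (ATrans P O ν0 τ) .init n (fun i => Sum.inl (νs i)) q)
    (hn : 1 ≤ n) : νs 0 = ν0 ∧ q 1 = .pair ν0 τ := by
  have htrans := hrun.2 0 hn
  rw [hrun.1, ATrans.init_left_iff] at htrans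
  exact ⟨Sum.inl_injective htrans.1, htrans.2⟩

end IsRun

theorem runs_of_antecedent_automaton_general
    {S : CES} {P : PreProof S} {O : OTF S} {ν0 : P.Node} {τ : S.TA}
    (hτ : τ ∈ S.tvA (P.seqOf ν0).1) {n : ℕ} (hn : 1 ≤ n) {νs : ℕ → P.Node}
    {q : ℕ → AState P.Node S.TA}
    (hrun : IsRun (ATrans P O ν0 τ) AState.init n (fun i => Sum.inl (νs i)) q) :
    ∃ (k : ℕ) (τs : ℕ → S.TA),
      1 ≤ k ∧ k ≤ n ∧ τs 0 = τ ∧ P.FollowsL n νs k τs ∧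
      (∀ i < k, q (i + 1) = AState.pair (νs i) (τs i)) ∧
      (∀ j, k ≤ j → j < n → q (j + 1) = AState.top) ∧
      (∀ τ'' : S.TA, q n = AState.pair (νs (n - 1)) τ'' →
        k = n ∧ τ'' = τs (n - 1)) := by
  obtain ⟨k, hkn, τs, hpair, htop⟩ := hrun.exists_eq_pair_and_eq_top
  obtain ⟨rfl, hq1⟩ := hrun.letter_zero_eq_and_state_one_eq hn
  have hk : 1 ≤ k := by
    by_contra! hk
    simpa [hq1] using htop 0 (by omega) hn
  obtain rfl : τ = τs 0 := (AState.pair.inj (hq1.symm.trans (hpair 0 hk))).2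
  refine ⟨k, τs, hk, hkn, rfl, hrun.followsL hkn hpair hτ, hpair, htop, fun τ'' hqn => ?_⟩
  obtain ⟨m, rfl⟩ := Nat.exists_eq_add_of_le' hn
  obtain rfl : k = m + 1 := by
    by_contra! hne
    simpa [hqn] using htop m (by omega) (by omega)
  exact ⟨rfl, (AState.pair.inj (hqn.symm.trans (hpair m (by omega)))).2⟩

/-- **Runs of the Antecedent Automaton.**
If `νs 0, …, νs (n-1)` is a path in a cyclic proof `P` and `q` is a run of
`𝒜^{(P,ν0)}_{(τ,τ')}` over the word `νs`, then there is a left-hand trace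
`τs 0, …, τs (k-1)` (`k ≤ n`) with `τs 0 = τ` such that the run states are
`(νs i, τs i)` for the first `k` letters and `⊤` afterwards.  Moreover if the
final state is a pair on `νs (n-1)` then `k = n` and its trace value is
`τs (n-1)`. -/
theorem runs_of_antecedent_automaton
    (S : CES) (P : PreProof S) (O : OTF S)
    (hproof : P.IsCyclicProof)
    (ν0 : P.Node) (τ : S.TA) (τ' : S.TC) (hτ : τ ∈ S.tvA (P.seqOf ν0).1)
    (n : ℕ) (hn : 1 ≤ n) (νs : ℕ → P.Node) (hpath : P.IsPath n νs)
    (q : ℕ → AState P.Node S.TA)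
    (hrun : IsRun (ATrans P O ν0 τ) AState.init n (fun i => Sum.inl (νs i)) q) :
    ∃ (k : ℕ) (τs : ℕ → S.TA),
      1 ≤ k ∧ k ≤ n ∧ τs 0 = τ ∧ P.FollowsL n νs k τs ∧
      (∀ i < k, q (i + 1) = AState.pair (νs i) (τs i)) ∧
      (∀ j, k ≤ j → j < n → q (j + 1) = AState.top) ∧
      (∀ τ'' : S.TA, q n = AState.pair (νs (n - 1)) τ'' →
        k = n ∧ τ'' = τs (n - 1)) :=
  runs_of_antecedent_automaton_general hτ hn hrun
end
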